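/- arXiv:1804.03785 — 2 statements merged into one kernel-verified Lean document; each statement's English description precedes it below -/
import Mathlib

section
/- For a number field K of degree n, the ideal counting function satisfies I_K(x) = ρ_K·x + Δ_K(x) where ρ_K is the residue of ζ_K at s = 1 and Δ_K(x) = o(x) as x → ∞; equivalently, I_K(x) ~ ρ_K·x. -/
open NumberField Filter

/-- The ideal counting function: the number of nonzero integral ideals of norm at most `x`. -/
noncomputable def idealCount (K : Type*) [Field K] [NumberField K] (x : ℝ) : ℕ :=
  Nat.card {I : Ideal (𝓞 K) // I ≠ ⊥ ∧ (Ideal.absNorm I : ℝ) ≤ x}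

theorem ideal_count_asymptotic (K : Type*) [Field K] [NumberField K] :
    Tendsto (fun x : ℝ => (idealCount K x : ℝ) / x) atTop
      (nhds ((2 ^ InfinitePlace.nrRealPlaces K * (2 * Real.pi) ^ InfinitePlace.nrComplexPlaces K *
        classNumber K * Units.regulator K) /
        (Units.torsionOrder K * Real.sqrt |(discr K : ℝ)|))) := by
  have h := NumberField.Ideal.tendsto_norm_le_div_atTop₀ K
  rw [mul_right_comm] at h
  push_cast at h
  refine h.congr fun x => ?_
  have hc : Nat.card {I : nonZeroDivisors (Ideal (𝓞 K)) //
      (Ideal.absNorm (I : Ideal (𝓞 K)) : ℝ) ≤ x} = idealCount K x := by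
    refine Nat.card_congr
      { toFun := fun I => ⟨I.1.1, nonZeroDivisors.ne_zero I.1.2, I.2⟩
        invFun := fun I => ⟨⟨I.1, mem_nonZeroDivisors_of_ne_zero I.2.1⟩, I.2.2⟩
        left_inv := fun _ => rfl
        right_inv := fun _ => rfl }
  rw [hc]
end

section
/- For a number field K of degree n over ℚ, the Dedekind zeta function satisfies the functional equation ζ_K(1−s) = D_K^{s−1/2} · 2^{n(1−s)} · π^{−ns} · Γ(s)^n · (cos(πs/2))^{r₁+r₂} · (sin(πs/2))^{r₂} · ζ_K(s), as an identity of meromorphic functions on ℂ. -/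
section PartP1
open MeasureTheory Set Complex

namespace DFE
variable {ι : Type*} [Fintype ι]

lemma poisson_pi (f : (ι → ℝ) → ℂ) (hf : Continuous f) (hfint : Integrable f)
    (hb : ∀ R : ℝ, ∃ u : (ι → ℤ) → ℝ, Summable u ∧
      ∀ x : ι → ℝ, ‖x‖ ≤ R → ∀ m : ι → ℤ, ‖f (x + fun i => (m i : ℝ))‖ ≤ u m)
    (hF : Summable fun k : ι → ℤ =>
      ∫ x : ι → ℝ, cexp (-(2 * Real.pi * I * ∑ i, (k i : ℂ) * x i)) * f x) :
    ∑' m : ι → ℤ, f (fun i => (m i : ℝ)) =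
      ∑' k : ι → ℤ, ∫ x : ι → ℝ, cexp (-(2 * Real.pi * I * ∑ i, (k i : ℂ) * x i)) * f x := by
  classical
  let p : (ι → ℝ) → UnitAddTorus ι := fun x i => (x i : UnitAddCircle)
  have hp : IsOpenQuotientMap p :=
    IsOpenQuotientMap.piMap (fun _ => QuotientAddGroup.isOpenQuotientMap_mk)
  let F : (ι → ℝ) → ℂ := fun x => ∑' m : ι → ℤ, f (x + fun i => (m i : ℝ))
  have hFc : Continuous F := by
    rw [continuous_iff_continuousAt]
    intro x
    obtain ⟨u, hu, hu'⟩ := hb (‖x‖ + 1)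
    have : ContinuousOn F (Metric.ball x 1) := by
      refine continuousOn_tsum (fun m => ?_) hu (fun m y hy => hu' y ?_ m)
      · exact (hf.comp (by fun_prop)).continuousOn
      · have : ‖y - x‖ < 1 := by simpa [dist_eq_norm] using hy
        have := norm_sub_norm_le y x
        linarith
    exact this.continuousAt (Metric.ball_mem_nhds x one_pos)
  have hper : ∀ x y, p x = p y → F x = F y := by
    intro x y hxy
    have : ∀ i, ∃ n : ℤ, x i = y i + n := by
      intro i
      have := congrFun hxy i
      simp only [p] at this
      rw [QuotientAddGroup.eq, AddSubgroup.mem_zmultiples_iff] at this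
      obtain ⟨n, hn⟩ := this
      refine ⟨-n, ?_⟩
      simp at hn ⊢
      linarith
    choose n hn using this
    simp only [F]
    rw [← (Equiv.addLeft n).tsum_eq (fun m : ι → ℤ => f (y + fun i => (m i : ℝ)))]
    refine tsum_congr fun m => ?_
    congr 1
    ext i
    simp [hn]
    ring
  let G : C(UnitAddTorus ι, ℂ) :=
    ⟨fun z => F (Function.surjInv hp.surjective z), by
      rw [hp.isQuotientMap.continuous_iff]
      convert hFc using 1
      ext x
      exact hper _ _ (Function.surjInv_eq hp.surjective _)⟩
  have hG : ∀ x, G (p x) = F x := fun x => hper _ _ (Function.surjInv_eq hp.surjective _)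
  let e : (ι → ℤ) → (ι → ℝ) → ℂ := fun k x => cexp (-(2 * Real.pi * I * ∑ i, (k i : ℂ) * x i))
  have hmF : ∀ k x, UnitAddTorus.mFourier (-k) (p x) = e k x := by
    intro k x
    simp only [UnitAddTorus.mFourier, p, e, ContinuousMap.coe_mk, Pi.neg_apply]
    simp_rw [fourier_coe_apply]
    rw [← Complex.exp_sum, Finset.mul_sum, ← Finset.sum_neg_distrib]
    congr 1
    refine Finset.sum_congr rfl fun i _ => ?_
    push_cast
    ring
  have he1 : ∀ k x, ‖e k x‖ = 1 := by
    intro k x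
    simp only [e]
    have : -(2 * Real.pi * I * ∑ i, (k i : ℂ) * x i) =
      ((-(2 * Real.pi * ∑ i, (k i : ℝ) * x i) : ℝ) : ℂ) * I := by
      push_cast; ring
    rw [this, Complex.norm_exp_ofReal_mul_I]
  have hec : ∀ k, Continuous (e k) := by
    intro k; simp only [e]; fun_prop
  have hper2 : ∀ k x (m : ι → ℤ), e k (x + fun i => (m i : ℝ)) = e k x := by
    intro k x m
    rw [← hmF, ← hmF]
    congr 1
    ext i
    simp [p]
  have hcoef : ∀ k, UnitAddTorus.mFourierCoeff G k = ∫ x : ι → ℝ, e k x * f x := by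
    intro k
    rw [UnitAddTorus.mFourierCoeff_eq_integral G k 0]
    have h1 : ∀ x : ι → ℝ, UnitAddTorus.mFourier (-k) (fun i => (x i : UnitAddCircle)) •
        G (fun i => (x i : UnitAddCircle)) = ∑' m : ι → ℤ,
          (fun x => e k x * f x) (x + fun i => (m i : ℝ)) := by
      intro x
      change UnitAddTorus.mFourier (-k) (p x) • G (p x) = _
      rw [hG, hmF, smul_eq_mul, ← tsum_mul_left]
      refine tsum_congr fun m => ?_
      simp only [hper2]
    simp_rw [h1]
    have hint2 : Integrable (fun x => e k x * f x) :=
      hfint.bdd_mul (c := 1) (hec k).aestronglyMeasurable (.of_forall fun x => (he1 k x).le)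
    let b := Pi.basisFun ℝ ι
    have hS : ({x : ι → ℝ | ∀ i, x i ∈ Ioc ((0 : ι → ℝ) i) ((0 : ι → ℝ) i + 1)} : Set (ι → ℝ))
        =ᵐ[volume] ZSpan.fundamentalDomain b := by
      rw [ZSpan.fundamentalDomain_pi_basisFun]
      have h2 := (Measure.univ_pi_Ioc_ae_eq_Icc (μ := fun _ : ι => (volume : Measure ℝ))
        (f := fun _ => 0) (g := fun _ => 1))
      have h3 := (Measure.univ_pi_Ico_ae_eq_Icc (μ := fun _ : ι => (volume : Measure ℝ))
        (f := fun _ => 0) (g := fun _ => 1))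
      have := h2.trans h3.symm
      have h6 : ({x : ι → ℝ | ∀ i, x i ∈ Ioc ((0 : ι → ℝ) i) ((0 : ι → ℝ) i + 1)} : Set (ι → ℝ))
        = Set.pi univ fun _ : ι => Ioc (0 : ℝ) 1 := by
        ext x; simp
      rw [h6]
      exact this
    rw [setIntegral_congr_set hS]
    have hfd := ZSpan.isAddFundamentalDomain b (volume : Measure (ι → ℝ))
    haveI : VAddInvariantMeasure (Submodule.span ℤ (Set.range b)) (ι → ℝ) volume :=
      inferInstanceAs <| VAddInvariantMeasure (Submodule.span ℤ (Set.range b)).toAddSubgroup _ _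
    rw [hfd.integral_eq_tsum'' _ hint2]
    let E : (ι → ℤ) ≃ Submodule.span ℤ (Set.range b) :=
      (b.restrictScalars ℤ).equivFun.symm.toEquiv
    have hE : ∀ m, ((E m : Submodule.span ℤ (Set.range b)) : ι → ℝ) = fun i => (m i : ℝ) := by
      intro m
      simp only [E, LinearEquiv.coe_toEquiv, Module.Basis.equivFun_symm_apply]
      ext i
      simp [Pi.single_apply, b]
    rw [← E.tsum_eq]
    have h4 : ∀ m x, E m +ᵥ x = x + fun i => (m i : ℝ) := by
      intro m x
      rw [Submodule.vadd_def, hE, vadd_eq_add, add_comm]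
    simp_rw [h4]
    obtain ⟨u, hu, hu'⟩ := hb 1
    have hfin : volume (ZSpan.fundamentalDomain b) < ⊤ :=
      (ZSpan.fundamentalDomain_isBounded b).measure_lt_top
    have hn : ∀ x ∈ ZSpan.fundamentalDomain b, ‖x‖ ≤ 1 := by
      intro x hx
      rw [ZSpan.fundamentalDomain_pi_basisFun] at hx
      rw [pi_norm_le_iff_of_nonneg zero_le_one]
      intro i
      have := hx i (mem_univ i)
      rw [Real.norm_eq_abs, abs_le]
      constructor <;> linarith [this.1, this.2]
    have hms := ZSpan.fundamentalDomain_measurableSet b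
    have hbd : ∀ m : ι → ℤ, ∀ᵐ x ∂(volume.restrict (ZSpan.fundamentalDomain b)),
        ‖e k (x + fun i => (m i : ℝ)) * f (x + fun i => (m i : ℝ))‖ ≤ u m := by
      intro m
      filter_upwards [ae_restrict_mem hms] with x hx
      rw [norm_mul, he1, one_mul]
      exact hu' x (hn x hx) m
    have hmeas : ∀ m : ι → ℤ, Continuous
      (fun x : ι → ℝ => e k (x + fun i => (m i : ℝ)) * f (x + fun i => (m i : ℝ))) := by
      intro m
      exact ((hec k).comp (by fun_prop)).mul (hf.comp (by fun_prop))
    symm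
    haveI : IsFiniteMeasure (volume.restrict (ZSpan.fundamentalDomain b)) :=
      ⟨by simpa using hfin⟩
    refine (integral_tsum_of_summable_integral_norm (fun m => ?_) ?_)
    · exact Integrable.of_bound (hmeas m).aestronglyMeasurable (u m) (hbd m)
    · refine Summable.of_nonneg_of_le (fun m => integral_nonneg fun _ => norm_nonneg _)
        (fun m => ?_) (hu.mul_right (volume.real (ZSpan.fundamentalDomain b)))
      refine (integral_mono_of_nonneg (.of_forall fun _ => norm_nonneg _)
        (integrable_const (u m)) (hbd m)).trans ?_
      simp [mul_comm]
  have hs : Summable (UnitAddTorus.mFourierCoeff G) := by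
    refine hF.congr fun k => ?_
    exact (hcoef k).symm
  have := UnitAddTorus.hasSum_mFourier_series_apply_of_summable hs (p 0)
  rw [hG] at this
  have h5 : F 0 = ∑' m : ι → ℤ, f (fun i => (m i : ℝ)) := by
    simp [F]
  rw [← h5, ← this.tsum_eq]
  refine tsum_congr fun k => ?_
  rw [hcoef]
  have : UnitAddTorus.mFourier k (p 0) = 1 := by
    have := hmF (-k) 0
    rw [neg_neg] at this
    rw [this]
    simp [e]
  rw [this]
  simp [e]

end DFE
end PartP1

section PartP2
open MeasureTheory Set Complex

namespace DFE
variable {ι : Type*} [Fintype ι]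

lemma summable_int_norm (r : ℝ) (hr : r < -(Fintype.card ι : ℝ)) :
    Summable fun m : ι → ℤ => ‖(fun i => (m i : ℝ) : ι → ℝ)‖ ^ r := by
  classical
  let b := Pi.basisFun ℝ ι
  let E : (ι → ℤ) ≃ Submodule.span ℤ (Set.range b) :=
      (b.restrictScalars ℤ).equivFun.symm.toEquiv
  have hE : ∀ m, ((E m : Submodule.span ℤ (Set.range b)) : ι → ℝ) = fun i => (m i : ℝ) := by
    intro m
    simp only [E, LinearEquiv.coe_toEquiv, Module.Basis.equivFun_symm_apply]
    ext i
    simp [Pi.single_apply, b]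
  have hfr : Module.finrank ℤ (Submodule.span ℤ (Set.range b)) = Fintype.card ι :=
    Module.finrank_eq_card_basis (b.restrictScalars ℤ)
  have := ZLattice.summable_norm_rpow (Submodule.span ℤ (Set.range b)) r (by rw [hfr]; exact hr)
  rw [← E.summable_iff] at this
  refine this.congr fun m => ?_
  simp only [Function.comp]
  rw [← hE]
  rfl

lemma summable_int_exp (c : ℝ) (hc : 0 < c) :
    Summable fun m : ι → ℤ => Real.exp (-c * ‖(fun i => (m i : ℝ) : ι → ℝ)‖ ^ 2) := by
  let N := Fintype.card ι + 1
  have h := summable_int_norm (ι := ι) (-(2 * N : ℕ) : ℝ) (by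
    simp only [N]; push_cast
    have : (0 : ℝ) ≤ Fintype.card ι := by positivity
    linarith)
  refine Summable.of_norm_bounded_eventually (h.mul_left (N.factorial * (c ^ N)⁻¹)) ?_
  have : ∀ᶠ m : ι → ℤ in Filter.cofinite, m ≠ 0 := by
    simp
  filter_upwards [this] with m hm
  set t := ‖(fun i => (m i : ℝ) : ι → ℝ)‖
  have ht : 0 < t := by
    rw [norm_pos_iff]
    contrapose! hm
    ext i
    have := congrFun hm i
    simpa using this
  rw [Real.norm_eq_abs, abs_of_pos (Real.exp_pos _), Real.rpow_neg ht.le, Real.rpow_natCast,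
    neg_mul, Real.exp_neg]
  have h1 := Real.pow_div_factorial_le_exp (c * t ^ 2) (by positivity) N
  have h2 : 0 < (c * t ^ 2) ^ N / N.factorial := by positivity
  calc (Real.exp (c * t ^ 2))⁻¹ ≤ ((c * t ^ 2) ^ N / N.factorial)⁻¹ := inv_anti₀ h2 h1
    _ = _ := by
      rw [mul_pow, ← pow_mul]
      field_simp

variable [DecidableEq ι]

lemma exists_lower (M : Matrix ι ι ℝ) (hM : M.det ≠ 0) :
    ∃ c > 0, ∀ x : ι → ℝ, c * ‖x‖ ^ 2 ≤ ∑ i, ((M.mulVec x) i) ^ 2 := by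
  let L := (Matrix.toLin' M⁻¹).toContinuousLinearMap
  refine ⟨(‖L‖ + 1)⁻¹ ^ 2, by positivity, fun x => ?_⟩
  have h1 : L (M.mulVec x) = x := by
    simp only [L, LinearMap.coe_toContinuousLinearMap', Matrix.toLin'_apply, Matrix.mulVec_mulVec]
    rw [Matrix.nonsing_inv_mul _ (Ne.isUnit hM), Matrix.one_mulVec]
  have h2 : ‖x‖ ≤ (‖L‖ + 1) * ‖M.mulVec x‖ := by
    conv_lhs => rw [← h1]
    refine (L.le_opNorm _).trans ?_
    gcongr
    linarith
  have h3 : ‖M.mulVec x‖ ^ 2 ≤ ∑ i, ((M.mulVec x) i) ^ 2 := by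
    have : ‖M.mulVec x‖ ≤ Real.sqrt (∑ i, ((M.mulVec x) i) ^ 2) := by
      rw [pi_norm_le_iff_of_nonneg (Real.sqrt_nonneg _)]
      intro i
      rw [Real.norm_eq_abs, ← Real.sqrt_sq_eq_abs]
      apply Real.sqrt_le_sqrt
      exact Finset.single_le_sum (f := fun i => ((M.mulVec x) i) ^ 2) (fun i _ => sq_nonneg _)
        (Finset.mem_univ i)
    calc _ ≤ (Real.sqrt (∑ i, ((M.mulVec x) i) ^ 2)) ^ 2 := by gcongr
      _ = _ := Real.sq_sqrt (Finset.sum_nonneg fun i _ => sq_nonneg _)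
  refine le_trans ?_ h3
  rw [← mul_pow]
  have : (‖L‖ + 1)⁻¹ * ‖x‖ ≤ ‖M.mulVec x‖ := by
    rw [inv_mul_le_iff₀ (by positivity)]
    exact h2
  gcongr

lemma integral_gauss (M : Matrix ι ι ℝ) (hM : M.det ≠ 0) (k : ι → ℝ) :
    ∫ x : ι → ℝ, cexp (-(2 * Real.pi * I * ∑ i, (k i : ℂ) * x i)) *
      (Real.exp (-Real.pi * ∑ i, ((M.mulVec x) i) ^ 2) : ℂ) =
    (|M.det|⁻¹ * Real.exp (-Real.pi * ∑ i, (((M⁻¹).transpose.mulVec k) i) ^ 2) : ℝ) := by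
  let w := (M⁻¹).transpose.mulVec k
  let g : (ι → ℝ) → ℂ := fun y => cexp (-Real.pi * ∑ i, (y i : ℂ) ^ 2 +
    ∑ i, (-(2 * Real.pi * I * w i)) * y i)
  have hg : ∀ x : ι → ℝ, cexp (-(2 * Real.pi * I * ∑ i, (k i : ℂ) * x i)) *
      (Real.exp (-Real.pi * ∑ i, ((M.mulVec x) i) ^ 2) : ℂ) = g (Matrix.toLin' M x) := by
    intro x
    have h1 : ∑ i, k i * x i = ∑ i, w i * (M.mulVec x) i := by
      change dotProduct k x = dotProduct w (M.mulVec x)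
      rw [Matrix.dotProduct_mulVec, ← Matrix.mulVec_transpose, Matrix.mulVec_mulVec,
        ← Matrix.transpose_mul, Matrix.nonsing_inv_mul _ (Ne.isUnit hM)]
      simp
    have h1' : ∑ i, (k i : ℂ) * x i = ∑ i, (w i : ℂ) * (M.mulVec x i : ℝ) := by
      exact_mod_cast congrArg (fun t : ℝ => (t : ℂ)) h1
    rw [h1', Complex.ofReal_exp, ← Complex.exp_add]
    simp only [g, Matrix.toLin'_apply]
    congr 1
    push_cast
    simp_rw [neg_mul]
    rw [Finset.sum_neg_distrib, Finset.mul_sum, add_comm]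
    congr 2
    refine Finset.sum_congr rfl fun i _ => by ring
  simp_rw [hg]
  have hcont : Continuous g := by fun_prop
  have hmap := Real.map_matrix_volume_pi_eq_smul_volume_pi hM
  have h2 : ∫ x, g (Matrix.toLin' M x) = ∫ y, g y ∂(Measure.map (Matrix.toLin' M) volume) := by
    rw [integral_map]
    · exact (LinearMap.continuous_of_finiteDimensional _).aemeasurable
    · exact hcont.aestronglyMeasurable
  rw [h2, hmap, integral_smul_measure]
  simp only [g]
  rw [GaussianFourier.integral_cexp_neg_mul_sum_add (by simpa using Real.pi_pos)]
  rw [ENNReal.toReal_ofReal (abs_nonneg _), abs_inv, Complex.real_smul]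
  have hpi : (Real.pi : ℂ) ≠ 0 := by exact_mod_cast Real.pi_ne_zero
  rw [div_self hpi, Complex.one_cpow, one_mul]
  push_cast
  congr 2
  rw [Finset.sum_div, Finset.mul_sum]
  refine Finset.sum_congr rfl fun i _ => ?_
  rw [neg_sq, mul_pow, mul_pow, mul_pow, Complex.I_sq]
  field_simp
  ring

lemma summable_gauss (M : Matrix ι ι ℝ) (hM : M.det ≠ 0) :
    Summable fun m : ι → ℤ =>
      Real.exp (-Real.pi * ∑ i, ((M.mulVec (fun i => (m i : ℝ))) i) ^ 2) := by
  obtain ⟨c, hc, h⟩ := exists_lower M hM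
  refine Summable.of_nonneg_of_le (fun m => (Real.exp_pos _).le) (fun m => ?_)
    (summable_int_exp (ι := ι) (Real.pi * c) (by positivity))
  apply Real.exp_le_exp.mpr
  have := mul_le_mul_of_nonneg_left (h (fun i => (m i : ℝ))) Real.pi_pos.le
  linarith

lemma gauss_theta (M : Matrix ι ι ℝ) (hM : M.det ≠ 0) :
    ∑' m : ι → ℤ, Real.exp (-Real.pi * ∑ i, ((M.mulVec (fun i => (m i : ℝ))) i) ^ 2) =
    |M.det|⁻¹ * ∑' m : ι → ℤ, Real.exp (-Real.pi *
      ∑ i, ((M⁻¹.transpose.mulVec (fun i => (m i : ℝ))) i) ^ 2) := by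
  obtain ⟨c, hc, hlow⟩ := exists_lower M hM
  let f : (ι → ℝ) → ℂ := fun x => (Real.exp (-Real.pi * ∑ i, ((M.mulVec x) i) ^ 2) : ℂ)
  have hM' : (M⁻¹.transpose).det ≠ 0 := by
    rw [Matrix.det_transpose, Matrix.det_nonsing_inv, Ring.inverse_eq_inv']
    exact inv_ne_zero hM
  have hf : Continuous f := by
    simp only [f]
    have : Continuous fun x : ι → ℝ => M.mulVec x :=
      Continuous.matrix_mulVec continuous_const continuous_id
    fun_prop
  have hfint : Integrable f := by
    by_contra hcon
    have h1 := integral_gauss M hM 0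
    simp only [Pi.zero_apply, ofReal_zero, zero_mul, Finset.sum_const_zero, mul_zero, neg_zero,
      Complex.exp_zero, one_mul] at h1
    rw [integral_undef hcon] at h1
    have : (|M.det|⁻¹ * Real.exp (-Real.pi * ∑ i, (((M⁻¹).transpose.mulVec 0) i) ^ 2) : ℝ) ≠ 0 := by
      positivity
    exact this (by exact_mod_cast h1.symm)
  have key := poisson_pi f hf hfint ?_ ?_
  · have h2 : ∀ k : ι → ℤ, ∫ x : ι → ℝ, cexp (-(2 * Real.pi * I * ∑ i, (k i : ℂ) * x i)) * f x =
      (|M.det|⁻¹ * Real.exp (-Real.pi * ∑ i, (((M⁻¹).transpose.mulVec (fun i => (k i : ℝ))) i) ^ 2)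
        : ℝ) := by
      intro k
      rw [← integral_gauss M hM]
      simp [f]
    simp_rw [h2] at key
    simp only [f] at key
    rw [← Complex.ofReal_tsum, ← Complex.ofReal_tsum, tsum_mul_left] at key
    exact_mod_cast key
  · intro R
    refine ⟨fun m => Real.exp (Real.pi * c * R ^ 2) * Real.exp (-(Real.pi * c / 2) *
      ‖(fun i => (m i : ℝ) : ι → ℝ)‖ ^ 2), (summable_int_exp _ (by positivity)).mul_left _, ?_⟩
    intro x hx m
    simp only [f]
    rw [Complex.norm_real, Real.norm_eq_abs, abs_of_pos (Real.exp_pos _), ← Real.exp_add]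
    apply Real.exp_le_exp.mpr
    set y : ι → ℝ := fun i => (m i : ℝ)
    have h1 := hlow (x + y)
    have h2 : ‖y‖ ≤ ‖x + y‖ + ‖x‖ := by
      have := norm_sub_le (x + y) x
      simpa using this
    have h3 : ‖y‖ ^ 2 ≤ 2 * ‖x + y‖ ^ 2 + 2 * R ^ 2 := by
      have hh : ‖y‖ ^ 2 ≤ (‖x + y‖ + R) ^ 2 := by
        gcongr
        linarith
      nlinarith [sq_nonneg (‖x + y‖ - R)]
    have h4 := mul_le_mul_of_nonneg_left h1 Real.pi_pos.le
    have h5 := mul_le_mul_of_nonneg_left h3 (by positivity : 0 ≤ Real.pi * c / 2)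
    linarith
  · have h2 : ∀ k : ι → ℤ, ∫ x : ι → ℝ, cexp (-(2 * Real.pi * I * ∑ i, (k i : ℂ) * x i)) * f x =
      (|M.det|⁻¹ * Real.exp (-Real.pi * ∑ i, (((M⁻¹).transpose.mulVec (fun i => (k i : ℝ))) i) ^ 2)
        : ℝ) := by
      intro k
      rw [← integral_gauss M hM]
      simp [f]
    simp_rw [h2]
    exact Complex.summable_ofReal.mpr ((summable_gauss _ hM').mul_left _)

end DFE
end PartP2

section PartP3
open MeasureTheory Set Complex NumberField

namespace DFE
set_option linter.unusedSectionVars false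
variable {ι : Type*} [Fintype ι] [DecidableEq ι]
variable {K : Type*} [Field K] [NumberField K]

/-- The infinite place of an algebra embedding. -/
noncomputable def pl (σ : K →ₐ[ℚ] ℂ) : InfinitePlace K := InfinitePlace.mk σ.toRingHom

/-- Complex conjugation on algebra embeddings. -/
noncomputable def conjEquiv : (K →ₐ[ℚ] ℂ) ≃ (K →ₐ[ℚ] ℂ) :=
  AlgEquiv.arrowCongr (AlgEquiv.refl) (Complex.conjAe.restrictScalars ℚ)

lemma conjEquiv_apply (σ : K →ₐ[ℚ] ℂ) (x : K) : conjEquiv σ x = starRingEnd ℂ (σ x) := rfl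

lemma pl_conj (σ : K →ₐ[ℚ] ℂ) : pl (conjEquiv σ) = pl σ := by
  unfold pl
  rw [← InfinitePlace.mk_conjugate_eq σ.toRingHom]
  rfl

/-- The quadratic form attached to positive weights. -/
noncomputable def qf (y : InfinitePlace K → ℝ) (a : K) : ℝ :=
  ∑ σ : K →ₐ[ℚ] ℂ, y (pl σ) * ‖σ a‖ ^ 2

/-- The complex Gram matrix. -/
noncomputable def gramC (b : Module.Basis ι ℚ K) (y : InfinitePlace K → ℝ) : Matrix ι ι ℂ :=
  fun i j => ∑ σ : K →ₐ[ℚ] ℂ, (y (pl σ) : ℂ) * (σ (b i) * starRingEnd ℂ (σ (b j)))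

/-- The real Gram matrix. -/
noncomputable def gram (b : Module.Basis ι ℚ K) (y : InfinitePlace K → ℝ) : Matrix ι ι ℝ :=
  fun i j => (gramC b y i j).re

lemma gramC_conj (b : Module.Basis ι ℚ K) (y : InfinitePlace K → ℝ) (i j : ι) :
    starRingEnd ℂ (gramC b y i j) = gramC b y i j := by
  simp only [gramC, map_sum, map_mul, Complex.conj_ofReal, Complex.conj_conj]
  rw [← conjEquiv.sum_comp]
  simp [pl_conj, conjEquiv_apply]

lemma gram_map (b : Module.Basis ι ℚ K) (y : InfinitePlace K → ℝ) :
    (gram b y).map (Complex.ofRealHom : ℝ →+* ℂ) = gramC b y := by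
  ext i j
  simp only [Matrix.map_apply, gram]
  exact Complex.conj_eq_iff_re.mp (gramC_conj b y i j)

lemma gramC_eq (b : Module.Basis ι ℚ K) (y : InfinitePlace K → ℝ) (e : ι ≃ (K →ₐ[ℚ] ℂ)) :
    gramC b y = Algebra.embeddingsMatrixReindex ℚ ℂ b e *
      Matrix.diagonal (fun j => (y (pl (e j)) : ℂ)) *
      (Algebra.embeddingsMatrixReindex ℚ ℂ b e).conjTranspose := by
  ext i j
  rw [Matrix.mul_apply]
  simp only [Matrix.mul_diagonal, gramC]
  rw [← e.sum_comp]
  refine Finset.sum_congr rfl fun k _ => ?_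
  simp [Algebra.embeddingsMatrixReindex, Algebra.embeddingsMatrix]
  ring

lemma emb_dual (b : Module.Basis ι ℚ K) (e : ι ≃ (K →ₐ[ℚ] ℂ)) :
    Algebra.embeddingsMatrixReindex ℚ ℂ b e *
      (Algebra.embeddingsMatrixReindex ℚ ℂ b.traceDual e).transpose = 1 := by
  ext i j
  rw [Matrix.mul_apply]
  have h := b.trace_mul_traceDual i j
  have h2 := trace_eq_sum_embeddings (K := ℚ) (L := K) ℂ (x := b i * b.traceDual j)
  rw [h] at h2
  rw [Matrix.one_apply]
  trans (algebraMap ℚ ℂ) (if i = j then 1 else 0)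
  · rw [h2, ← e.sum_comp]
    refine Finset.sum_congr rfl fun k _ => ?_
    simp [Algebra.embeddingsMatrixReindex, Algebra.embeddingsMatrix]
  · split_ifs <;> simp

lemma gram_mul_dual (b : Module.Basis ι ℚ K) (y : InfinitePlace K → ℝ) (hy : ∀ v, 0 < y v)
    (e : ι ≃ (K →ₐ[ℚ] ℂ)) :
    gram b y * gram b.traceDual (fun v => (y v)⁻¹) = 1 := by
  have hinj : Function.Injective (fun A : Matrix ι ι ℝ => A.map (Complex.ofRealHom : ℝ →+* ℂ)) :=
    Matrix.map_injective Complex.ofReal_injective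
  apply hinj
  simp only
  rw [Matrix.map_mul, gram_map, gram_map]
  have h2 : gramC b.traceDual (fun v => (y v)⁻¹) =
      (gramC b.traceDual (fun v => (y v)⁻¹)).map (starRingEnd ℂ) := by
    ext i j
    rw [Matrix.map_apply, gramC_conj]
  rw [h2, gramC_eq _ _ e, gramC_eq _ _ e]
  set E := Algebra.embeddingsMatrixReindex ℚ ℂ b e
  set E' := Algebra.embeddingsMatrixReindex ℚ ℂ b.traceDual e
  have h3 : E * E'.transpose = 1 := emb_dual b e
  have h4 : E'.transpose * E = 1 := mul_eq_one_comm.mp h3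
  rw [Matrix.map_mul, Matrix.map_mul]
  have h5 : E.conjTranspose * E'.map (starRingEnd ℂ) = 1 := by
    have h6 : E.transpose * E' = 1 := by
      have := congrArg Matrix.transpose h4
      simpa using this
    have := congrArg (fun A : Matrix ι ι ℂ => A.map (starRingEnd ℂ)) h6
    simp only [Matrix.map_mul] at this
    rw [Matrix.map_one _ (map_zero _) (map_one _)] at this
    exact this
  have h7 : (E'.conjTranspose).map (starRingEnd ℂ) = E'.transpose := by
    ext i j; simp
  have h8 : (Matrix.diagonal (fun j => ((y (pl (e j)) : ℝ) : ℂ))) *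
      (Matrix.diagonal (fun j => (((y (pl (e j)))⁻¹ : ℝ) : ℂ))).map (starRingEnd ℂ) = 1 := by
    rw [Matrix.diagonal_map (map_zero _), Matrix.diagonal_mul_diagonal, ← Matrix.diagonal_one]
    congr 1
    ext j
    have : (y (pl (e j)) : ℂ) ≠ 0 := by exact_mod_cast (hy _).ne'
    simp [this]
  rw [h7]
  calc _ = E * Matrix.diagonal (fun j => ((y (pl (e j)) : ℝ) : ℂ)) *
      (E.conjTranspose * E'.map (starRingEnd ℂ)) *
      (Matrix.diagonal (fun j => (((y (pl (e j)))⁻¹ : ℝ) : ℂ))).map (starRingEnd ℂ) *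
      E'.transpose := by simp only [Matrix.mul_assoc]
    _ = E * (Matrix.diagonal (fun j => ((y (pl (e j)) : ℝ) : ℂ)) *
      (Matrix.diagonal (fun j => (((y (pl (e j)))⁻¹ : ℝ) : ℂ))).map (starRingEnd ℂ)) *
      E'.transpose := by rw [h5]; simp only [Matrix.mul_assoc, Matrix.one_mul]
    _ = _ := by
      rw [h8, Matrix.mul_one, h3, Matrix.map_one _ (map_zero _) (map_one _)]

lemma gram_det (b : Module.Basis ι ℚ K) (y : InfinitePlace K → ℝ)
    (e : ι ≃ (K →ₐ[ℚ] ℂ)) :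
    (gram b y).det = |(Algebra.discr ℚ b : ℝ)| * ∏ σ : K →ₐ[ℚ] ℂ, y (pl σ) := by
  apply Complex.ofReal_injective
  have : ((gram b y).det : ℂ) = (gramC b y).det := by
    rw [← gram_map]
    exact RingHom.map_det Complex.ofRealHom _
  rw [this, gramC_eq _ _ e, Matrix.det_mul, Matrix.det_mul, Matrix.det_conjTranspose,
    Matrix.det_diagonal]
  have h := Algebra.discr_eq_det_embeddingsMatrixReindex_pow_two ℚ ℂ b e
  set d := (Algebra.embeddingsMatrixReindex ℚ ℂ b e).det
  rw [← e.prod_comp]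
  push_cast
  have h2 : d * star d = ((|(Algebra.discr ℚ b : ℝ)| : ℝ) : ℂ) := by
    have : ‖d‖ ^ 2 = |(Algebra.discr ℚ b : ℝ)| := by
      rw [← norm_pow, ← h]
      simp only [eq_ratCast]
      rw [← Complex.ofReal_ratCast, Complex.norm_real, Real.norm_eq_abs]
    rw [← this]
    have := Complex.mul_conj d
    rw [Complex.normSq_eq_norm_sq] at this
    exact this
  rw [← h2]
  ring

lemma gram_quad (b : Module.Basis ι ℚ K) (y : InfinitePlace K → ℝ) (x : ι → ℝ) :
    dotProduct x ((gram b y).mulVec x) =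
      ∑ σ : K →ₐ[ℚ] ℂ, y (pl σ) * ‖∑ i, (x i : ℂ) * σ (b i)‖ ^ 2 := by
  apply Complex.ofReal_injective
  have h1 : ((dotProduct x ((gram b y).mulVec x) : ℝ) : ℂ) =
      ∑ i, ∑ j, (x i : ℂ) * (gramC b y i j * x j) := by
    simp only [dotProduct, Matrix.mulVec, Finset.mul_sum, ← gram_map]
    push_cast
    rfl
  rw [h1]
  push_cast
  have h2 : ∀ σ : K →ₐ[ℚ] ℂ, ((‖∑ i, (x i : ℂ) * σ (b i)‖ : ℝ) : ℂ) ^ 2 =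
     ∑ i, ∑ j, ((x i : ℂ) * σ (b i)) * (starRingEnd ℂ (σ (b j)) * x j) := by
    intro σ
    rw [← Complex.mul_conj', map_sum, Finset.sum_mul_sum]
    refine Finset.sum_congr rfl fun i _ => Finset.sum_congr rfl fun j _ => ?_
    rw [map_mul, Complex.conj_ofReal]
    ring
  simp_rw [h2, gramC, Finset.sum_mul, Finset.mul_sum]
  rw [Finset.sum_comm]
  rw [Finset.sum_congr rfl fun i _ => Finset.sum_comm]
  rw [Finset.sum_comm]
  rw [Finset.sum_congr rfl fun i _ => Finset.sum_comm]
  refine Finset.sum_congr rfl fun i _ => Finset.sum_congr rfl fun j _ =>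
    Finset.sum_congr rfl fun k _ => ?_
  ring

lemma gram_quad_int (b : Module.Basis ι ℚ K) (y : InfinitePlace K → ℝ) (m : ι → ℤ) :
    dotProduct (fun i => (m i : ℝ)) ((gram b y).mulVec (fun i => (m i : ℝ))) =
      qf y (∑ i, (m i) • b i) := by
  rw [gram_quad, qf]
  refine Finset.sum_congr rfl fun σ _ => ?_
  simp

open scoped MatrixOrder Matrix.Norms.L2Operator in
lemma exists_factor (Q : Matrix ι ι ℝ) (hQ : Q.PosSemidef) : ∃ M, Q = M.transpose * M := by
  obtain ⟨B, hB⟩ := CStarAlgebra.nonneg_iff_eq_star_mul_self.mp hQ.nonneg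
  refine ⟨B, ?_⟩
  rw [hB, Matrix.star_eq_conjTranspose, Matrix.conjTranspose_eq_transpose_of_trivial]

lemma exists_gram (b : Module.Basis ι ℚ K) (y : InfinitePlace K → ℝ) (hy : ∀ v, 0 < y v)
    (e : ι ≃ (K →ₐ[ℚ] ℂ)) :
    ∃ M : Matrix ι ι ℝ, M.det ≠ 0 ∧ gram b y = M.transpose * M := by
  have hsymm : (gram b y).IsHermitian := by
    ext i j
    simp only [Matrix.conjTranspose_apply, star_trivial]
    apply Complex.ofReal_injective
    have h : ∀ i j, ((gram b y i j : ℝ) : ℂ) = gramC b y i j := fun i j =>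
      congrFun (congrFun (gram_map b y) i) j
    rw [h, h]
    rw [← gramC_conj]
    simp only [gramC, map_sum, map_mul, Complex.conj_ofReal, Complex.conj_conj]
    refine Finset.sum_congr rfl fun k _ => ?_
    ring
  have hps : (gram b y).PosSemidef := by
    refine Matrix.PosSemidef.of_dotProduct_mulVec_nonneg hsymm fun x => ?_
    simp only [star_trivial]
    rw [gram_quad]
    exact Finset.sum_nonneg fun σ _ => mul_nonneg (hy _).le (sq_nonneg _)
  obtain ⟨M, hM⟩ := exists_factor _ hps
  refine ⟨M, ?_, hM⟩
  intro h0
  have h1 := gram_mul_dual b y hy e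
  have h2 := congrArg Matrix.det h1
  rw [hM, Matrix.det_mul, Matrix.det_mul, h0] at h2
  simp at h2

lemma mul_quad (M Q : Matrix ι ι ℝ) (h : Q = M.transpose * M) (x : ι → ℝ) :
    ∑ i, ((M.mulVec x) i) ^ 2 = dotProduct x (Q.mulVec x) := by
  rw [h, ← Matrix.mulVec_mulVec, Matrix.dotProduct_mulVec, ← Matrix.mulVec_transpose,
    Matrix.transpose_transpose]
  simp [dotProduct, sq]

lemma nonempty_emb (b : Module.Basis ι ℚ K) : Nonempty (ι ≃ (K →ₐ[ℚ] ℂ)) := by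
  refine ⟨Fintype.equivOfCardEq ?_⟩
  rw [AlgHom.card, Module.finrank_eq_card_basis b]

theorem theta_basis (b : Module.Basis ι ℚ K) (y : InfinitePlace K → ℝ) (hy : ∀ v, 0 < y v) :
    ∑' m : ι → ℤ, Real.exp (-Real.pi * qf y (∑ i, m i • b i)) =
    (Real.sqrt (|(Algebra.discr ℚ b : ℝ)| * ∏ σ : K →ₐ[ℚ] ℂ, y (pl σ)))⁻¹ *
    ∑' m : ι → ℤ, Real.exp (-Real.pi * qf (fun v => (y v)⁻¹) (∑ i, m i • b.traceDual i)) := by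
  obtain ⟨e⟩ := nonempty_emb b
  obtain ⟨M, hM, hQ⟩ := exists_gram b y hy e
  have h := gauss_theta M hM
  have h1 : gram b.traceDual (fun v => (y v)⁻¹) = (M⁻¹.transpose).transpose * M⁻¹.transpose := by
    have h2 := gram_mul_dual b y hy e
    rw [hQ] at h2
    have h3 := Matrix.inv_eq_right_inv h2
    rw [← h3, Matrix.mul_inv_rev, Matrix.transpose_transpose, Matrix.transpose_nonsing_inv]
  simp_rw [mul_quad M _ hQ, mul_quad _ _ h1, gram_quad_int] at h
  rw [h]
  congr 2
  rw [← gram_det b y e, hQ, Matrix.det_mul, Matrix.det_transpose, Real.sqrt_mul_self_eq_abs]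

theorem qf_lower (b : Module.Basis ι ℚ K) :
    ∃ c > 0, ∀ m : ι → ℤ, c * ‖(fun i => (m i : ℝ) : ι → ℝ)‖ ^ 2 ≤
      qf (fun _ => 1) (∑ i, m i • b i) := by
  obtain ⟨e⟩ := nonempty_emb b
  obtain ⟨M, hM, hQ⟩ := exists_gram b (fun _ => 1) (fun _ => one_pos) e
  obtain ⟨c, hc, h⟩ := exists_lower M hM
  refine ⟨c, hc, fun m => ?_⟩
  rw [← gram_quad_int, ← mul_quad M _ hQ]
  exact h _

end DFE
end PartP3

section PartP4
open MeasureTheory Set Complex NumberField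

namespace DFE
set_option linter.unusedSectionVars false
section P4
open scoped nonZeroDivisors ENNReal
variable {ι : Type*} [Fintype ι] [DecidableEq ι]
variable {K : Type*} [Field K] [NumberField K]

lemma tsum_basis (b : Module.Basis ι ℚ K) (I : FractionalIdeal (𝓞 K)⁰ K)
    (h : ∀ x, x ∈ Submodule.span ℤ (Set.range b) ↔ x ∈ I) (F : K → ℝ≥0∞) :
    ∑' a : {a : K // a ∈ I}, F a = ∑' m : ι → ℤ, F (∑ i, m i • b i) := by
  let e : (ι → ℤ) ≃ {a : K // a ∈ I} :=
    (b.restrictScalars ℤ).equivFun.symm.toEquiv.trans (Equiv.subtypeEquivRight h)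
  rw [← e.tsum_eq]
  congr 1
  ext m
  have : ((e m : {a : K // a ∈ I}) : K) = ∑ i, m i • b i := by
    change (((b.restrictScalars ℤ).equivFun.symm m : Submodule.span ℤ (Set.range b)) : K) = _
    rw [Module.Basis.equivFun_symm_apply]
    push_cast
    simp
  rw [this]

lemma qf_mono {y y' : InfinitePlace K → ℝ} (h : ∀ v, y v ≤ y' v) (a : K) : qf y a ≤ qf y' a := by
  unfold qf
  gcongr
  exact h _

lemma qf_smul (c : ℝ) (y : InfinitePlace K → ℝ) (a : K) : qf (fun v => c * y v) a = c * qf y a := by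
  simp [qf, Finset.mul_sum, mul_assoc]

lemma qf_lower' (b : Module.Basis ι ℚ K) (y : InfinitePlace K → ℝ) (hy : ∀ v, 0 < y v) :
    ∃ c > 0, ∀ m : ι → ℤ, c * ‖(fun i => (m i:ℝ) : ι→ℝ)‖^2 ≤ qf y (∑ i, m i • b i) := by
  obtain ⟨c, hc, h⟩ := qf_lower b
  obtain ⟨v₀, hv₀⟩ := Finite.exists_min y
  refine ⟨y v₀ * c, mul_pos (hy _) hc, fun m => ?_⟩
  calc _ = y v₀ * (c * ‖(fun i => (m i:ℝ) : ι→ℝ)‖^2) := by ring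
    _ ≤ y v₀ * qf (fun _ => 1) (∑ i, m i • b i) := by gcongr; exact (hy _).le; exact h m
    _ = qf (fun _ => y v₀ * 1) (∑ i, m i • b i) := (qf_smul _ _ _).symm
    _ ≤ _ := qf_mono (fun v => by simpa using hv₀ v) _

lemma summable_qf (b : Module.Basis ι ℚ K) (y : InfinitePlace K → ℝ) (hy : ∀ v, 0 < y v) :
    Summable fun m : ι → ℤ => Real.exp (-Real.pi * qf y (∑ i, m i • b i)) := by
  obtain ⟨c, hc, h⟩ := qf_lower' b y hy
  refine Summable.of_nonneg_of_le (fun _ => (Real.exp_pos _).le) (fun m => ?_)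
    (summable_int_exp (ι := ι) (c := Real.pi * c) (by positivity))
  rw [Real.exp_le_exp]
  have := mul_le_mul_of_nonneg_left (h m) Real.pi_pos.le
  linarith

/-- The theta function of a fractional ideal. -/
noncomputable def th (I : FractionalIdeal (𝓞 K)⁰ K) (y : InfinitePlace K → ℝ) : ℝ≥0∞ :=
  ∑' a : {a : K // a ∈ I}, ENNReal.ofReal (Real.exp (-Real.pi * qf y a))

lemma discr_basisOfFractionalIdeal (I : (FractionalIdeal (𝓞 K)⁰ K)ˣ) :
    Algebra.discr ℚ (basisOfFractionalIdeal K I) =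
      (FractionalIdeal.absNorm I.1) ^ 2 * (discr K : ℚ) := by
  have hcard : Fintype.card (Module.Free.ChooseBasisIndex ℤ (𝓞 K)) =
      Fintype.card (Module.Free.ChooseBasisIndex ℤ I) := by
    rw [← Module.finrank_eq_card_basis (integralBasis K),
      ← Module.finrank_eq_card_basis (basisOfFractionalIdeal K I)]
  let e := Fintype.equivOfCardEq hcard
  rw [← det_basisOfFractionalIdeal_eq_absNorm K I e, sq_abs, coe_discr, Module.Basis.det_apply]
  have h1 := Algebra.discr_reindex (A := ℚ) (basisOfFractionalIdeal K I) e.symm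
  rw [← h1, ← Module.Basis.coe_reindex, ← Algebra.discr_of_matrix_vecMul,
    Module.Basis.toMatrix_map_vecMul]

lemma qf_eq (y : InfinitePlace K → ℝ) (a : K) :
    qf y a = ∑ v : InfinitePlace K, (v.mult : ℝ) * y v * (v a) ^ 2 := by
  classical
  unfold qf
  rw [← (RingHom.equivRatAlgHom K ℂ).sum_comp]
  have h : ∀ φ : K →+* ℂ, y (pl (RingHom.equivRatAlgHom K ℂ φ)) * ‖RingHom.equivRatAlgHom K ℂ φ a‖ ^ 2 =
    y (InfinitePlace.mk φ) * (InfinitePlace.mk φ a) ^ 2 := fun φ => rfl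
  simp_rw [h]
  rw [← Finset.sum_fiberwise (g := InfinitePlace.mk)]
  refine Finset.sum_congr rfl fun v _ => ?_
  rw [Finset.sum_congr rfl (g := fun _ => y v * (v a) ^ 2)
    (fun φ hφ => by rw [(Finset.mem_filter.1 hφ).2]), Finset.sum_const,
    InfinitePlace.card_filter_mk_eq]
  simp [mul_assoc]

lemma prod_pl (y : InfinitePlace K → ℝ) :
    ∏ σ : K →ₐ[ℚ] ℂ, y (pl σ) = ∏ v : InfinitePlace K, y v ^ v.mult := by
  classical
  rw [← (RingHom.equivRatAlgHom K ℂ).prod_comp]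
  have h : ∀ φ : K →+* ℂ, y (pl (RingHom.equivRatAlgHom K ℂ φ)) =
    y (InfinitePlace.mk φ) := fun φ => rfl
  simp_rw [h]
  rw [← Finset.prod_fiberwise (g := InfinitePlace.mk)]
  refine Finset.prod_congr rfl fun v _ => ?_
  rw [Finset.prod_congr rfl (g := fun _ => y v)
    (fun φ hφ => by rw [(Finset.mem_filter.1 hφ).2]), Finset.prod_const,
    InfinitePlace.card_filter_mk_eq]

/-- Theta inversion for fractional ideals. -/
lemma th_inv (I : (FractionalIdeal (𝓞 K)⁰ K)ˣ) (y : InfinitePlace K → ℝ) (hy : ∀ v, 0 < y v) :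
    th (I : FractionalIdeal (𝓞 K)⁰ K) y = ENNReal.ofReal
      ((FractionalIdeal.absNorm I.1 : ℝ) * Real.sqrt |(discr K : ℝ)| *
        Real.sqrt (∏ v : InfinitePlace K, y v ^ v.mult))⁻¹ *
      th (FractionalIdeal.dual ℤ ℚ (I : FractionalIdeal (𝓞 K)⁰ K)) (fun v => (y v)⁻¹) := by
  classical
  set b := basisOfFractionalIdeal K I with hb
  have hy' : ∀ v, 0 < (y v)⁻¹ := fun v => inv_pos.2 (hy v)
  have h1 : ∀ x, x ∈ Submodule.span ℤ (Set.range b) ↔ x ∈ I.1 :=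
    fun x => mem_span_basisOfFractionalIdeal K
  have h2 : ∀ x, x ∈ Submodule.span ℤ (Set.range b.traceDual) ↔
      x ∈ FractionalIdeal.dual ℤ ℚ (I : FractionalIdeal (𝓞 K)⁰ K) := by
    intro x
    rw [← Submodule.traceDual_span_of_basis ℤ (B := 𝓞 K) (I := (I.1 : Submodule (𝓞 K) K)) b
      (by ext x; exact (h1 x).symm)]
    rw [← FractionalIdeal.mem_coe, FractionalIdeal.coe_dual ℤ ℚ (Units.ne_zero I)]
    rfl
  have hN : (0:ℝ) ≤ (FractionalIdeal.absNorm I.1 : ℝ) := by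
    exact_mod_cast FractionalIdeal.absNorm_nonneg _
  unfold th
  rw [tsum_basis b _ h1 (fun a => ENNReal.ofReal (Real.exp (-Real.pi * qf y a))),
    tsum_basis b.traceDual _ h2
      (fun a => ENNReal.ofReal (Real.exp (-Real.pi * qf (fun v => (y v)⁻¹) a))),
    ← ENNReal.ofReal_tsum_of_nonneg (fun _ => (Real.exp_pos _).le) (summable_qf b y hy),
    ← ENNReal.ofReal_tsum_of_nonneg (fun _ => (Real.exp_pos _).le)
      (summable_qf b.traceDual _ hy'), ← ENNReal.ofReal_mul (by positivity), theta_basis b y hy]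
  congr 3
  rw [hb, discr_basisOfFractionalIdeal, prod_pl]
  push_cast
  rw [abs_mul, Real.sqrt_mul (by positivity), Real.sqrt_mul (by positivity), abs_pow, abs_of_nonneg hN,
    Real.sqrt_sq hN]

lemma absNorm_dual (I : (FractionalIdeal (𝓞 K)⁰ K)ˣ) :
    FractionalIdeal.absNorm (FractionalIdeal.dual ℤ ℚ (I : FractionalIdeal (𝓞 K)⁰ K)) =
      (FractionalIdeal.absNorm I.1)⁻¹ * |(discr K : ℚ)|⁻¹ := by
  rw [FractionalIdeal.dual_eq_mul_inv, map_mul, map_inv₀, mul_comm]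
  congr 1
  have := coeIdeal_differentIdeal ℤ ℚ K (𝓞 K)
  rw [← inv_inv (FractionalIdeal.dual ℤ ℚ 1), ← this, map_inv₀,
    FractionalIdeal.coeIdeal_absNorm, absNorm_differentIdeal K]
  simp
end P4
end DFE
end PartP4

section PartP5
open MeasureTheory Set Complex NumberField

namespace DFE
set_option linter.unusedSectionVars false
section P5
open scoped nonZeroDivisors ENNReal Pointwise Classical
open _root_.NumberField.Units (logEmbedding unitLattice basisUnitLattice rank)
open Units.dirichletUnitTheorem
variable {K : Type*} [Field K] [NumberField K]

lemma countable_field : Countable K :=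
  (Module.finBasis ℚ K).equivFun.toEquiv.injective.countable

/-- Scaled logarithmic coordinates at all infinite places. -/
noncomputable def lo (h : logSpace K) (v : InfinitePlace K) : ℝ :=
  if hv : v = w₀ then -2 * (∑ w, h w) / (w₀ : InfinitePlace K).mult
  else 2 * h ⟨v, hv⟩ / v.mult

lemma mult_pos' (v : InfinitePlace K) : (0:ℝ) < v.mult := by
  exact_mod_cast InfinitePlace.mult_pos

lemma sum_mult_lo (h : logSpace K) : ∑ v : InfinitePlace K, (v.mult : ℝ) * lo h v = 0 := by
  classical
  rw [Fintype.sum_eq_add_sum_subtype_ne _ (w₀ : InfinitePlace K)]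
  have h1 : ∀ w : {w : InfinitePlace K // w ≠ w₀}, (w.1.mult : ℝ) * lo h w.1 = 2 * h w := by
    intro w
    rw [lo, dif_neg w.2]
    have := (mult_pos' w.1).ne'
    field_simp
  simp_rw [h1]
  rw [lo, dif_pos rfl, ← Finset.mul_sum]
  have := (mult_pos' (w₀ : InfinitePlace K)).ne'
  field_simp
  ring

lemma lo_add (h h' : logSpace K) (v : InfinitePlace K) : lo (h + h') v = lo h v + lo h' v := by
  unfold lo
  split_ifs with hv
  · simp [Finset.sum_add_distrib]; ring
  · simp; ring

lemma lo_smul (c : ℝ) (h : logSpace K) (v : InfinitePlace K) : lo (c • h) v = c * lo h v := by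
  unfold lo
  split_ifs with hv
  · simp only [Pi.smul_apply, smul_eq_mul, ← Finset.mul_sum]; ring
  · simp; ring

lemma lo_neg (h : logSpace K) (v : InfinitePlace K) : lo (-h) v = - lo h v := by
  have := lo_smul (-1) h v
  simpa using this

/-- The linear version of `lo`. -/
noncomputable def loL : logSpace K →ₗ[ℝ] (InfinitePlace K → ℝ) where
  toFun h v := lo h v
  map_add' h h' := by ext v; exact lo_add h h' v
  map_smul' c h := by ext v; exact lo_smul c h v

lemma lo_unit (ε : (𝓞 K)ˣ) (v : InfinitePlace K) :
    lo (logEmbedding K (Additive.ofMul ε)) v = 2 * Real.log (v (ε : K)) := by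
  classical
  unfold lo
  split_ifs with hv
  · have := sum_logEmbedding_component ε
    have h0 := (mult_pos' (w₀ : InfinitePlace K)).ne'
    subst hv
    field_simp
    have h2 : ∀ a b c : ℝ, a = -b * c → - a = b * c := by intro a b c h; rw [h]; ring
    apply h2
    convert this
  · rw [logEmbedding_component]
    have := (mult_pos' v).ne'
    field_simp

/-- The weights at scale `x` and position `h`. -/
noncomputable def yy (x : ℝ) (h : logSpace K) (v : InfinitePlace K) : ℝ := x * Real.exp (lo h v)

lemma yy_pos {x : ℝ} (hx : 0 < x) (h : logSpace K) (v : InfinitePlace K) : 0 < yy x h v := by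
  unfold yy; positivity

lemma yy_inv {x : ℝ} (h : logSpace K) :
    (fun v => (yy (1 / x) h v)⁻¹) = yy x (-h) := by
  ext v
  simp [yy, lo_neg, Real.exp_neg, mul_comm]

lemma prod_yy {x : ℝ} (h : logSpace K) :
    ∏ v : InfinitePlace K, (yy x h v) ^ v.mult = x ^ (Module.finrank ℚ K) := by
  unfold yy
  simp_rw [mul_pow, ← Real.exp_nat_mul]
  rw [Finset.prod_mul_distrib, Finset.prod_pow_eq_pow_sum, ← Real.exp_sum, sum_mult_lo,
    Real.exp_zero, mul_one, InfinitePlace.sum_mult_eq]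

lemma continuous_lo (v : InfinitePlace K) : Continuous fun h : logSpace K => lo h v := by
  have : Continuous (loL : logSpace K →ₗ[ℝ] (InfinitePlace K → ℝ)) :=
    LinearMap.continuous_of_finiteDimensional _
  exact (continuous_apply v).comp this

/-- Bounded measurable fundamental domains for the unit lattice. -/
def IsFD (F : Set (logSpace K)) : Prop :=
  MeasurableSet F ∧ Bornology.IsBounded F ∧ ∀ x, ∃! g : unitLattice K, g +ᵥ x ∈ F

lemma exists_isFD : ∃ F : Set (logSpace K), IsFD F := by
  refine ⟨ZSpan.fundamentalDomain ((basisUnitLattice K).ofZLatticeBasis ℝ),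
    ZSpan.fundamentalDomain_measurableSet _, ZSpan.fundamentalDomain_isBounded _, ?_⟩
  have h := ZSpan.exist_unique_vadd_mem_fundamentalDomain ((basisUnitLattice K).ofZLatticeBasis ℝ)
  have e : Submodule.span ℤ (Set.range ((basisUnitLattice K).ofZLatticeBasis ℝ)) = unitLattice K :=
    (basisUnitLattice K).ofZLatticeBasis_span ℝ
  rw [e] at h
  exact h

lemma IsFD.neg {F : Set (logSpace K)} (hF : IsFD F) : IsFD (-F) := by
  refine ⟨hF.1.neg, hF.2.1.neg, fun x => ?_⟩
  obtain ⟨g, hg, hu⟩ := hF.2.2 (-x)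
  refine ⟨-g, ?_, fun g' hg' => ?_⟩
  · simp only [Set.mem_neg]
    convert hg using 1
    simp [Submodule.vadd_def, add_comm]
  · rw [eq_neg_iff_add_eq_zero, ← eq_neg_iff_add_eq_zero, ← neg_eq_iff_eq_neg]
    apply hu
    simp only [Set.mem_neg] at hg'
    convert hg' using 1
    simp [Submodule.vadd_def]; abel

/-- The theta sum without the zero term. -/
noncomputable def th0 (I : FractionalIdeal (𝓞 K)⁰ K) (y : InfinitePlace K → ℝ) : ℝ≥0∞ :=
  ∑' a : {a : K // a ∈ I ∧ a ≠ 0}, ENNReal.ofReal (Real.exp (-Real.pi * qf y a))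

lemma tsum_ne_zero' {X : Type*} [Zero X] (p : X → Prop) (h0 : p 0) (F : X → ℝ≥0∞) :
    ∑' a : {a : X // p a}, F a = F 0 + ∑' a : {a : X // p a ∧ a ≠ 0}, F a := by
  have h1 : ∑' a : {a : X // p a}, F a = ∑' a, Set.indicator {a : X | p a} F a :=
    tsum_subtype {a : X | p a} F
  have h2 : ∑' a : {a : X // p a ∧ a ≠ 0}, F a =
      ∑' a, Set.indicator {a : X | p a ∧ a ≠ 0} F a :=
    tsum_subtype {a : X | p a ∧ a ≠ 0} F
  rw [h1, h2, ENNReal.tsum_eq_add_tsum_ite 0]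
  congr 1
  · rw [Set.indicator_of_mem]; exact h0
  · congr 1
    ext a
    by_cases ha : a = 0 <;> simp [Set.indicator, ha]

lemma tsum_ne_zero (I : FractionalIdeal (𝓞 K)⁰ K) (F : K → ℝ≥0∞) :
    ∑' a : {a : K // a ∈ I}, F a = F 0 + ∑' a : {a : K // a ∈ I ∧ a ≠ 0}, F a :=
  tsum_ne_zero' (fun a => a ∈ I) (I : Submodule (𝓞 K) K).zero_mem F

lemma th_eq (I : FractionalIdeal (𝓞 K)⁰ K) (y : InfinitePlace K → ℝ) : th I y = 1 + th0 I y := by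
  unfold th th0
  rw [tsum_ne_zero I fun a => ENNReal.ofReal (Real.exp (-Real.pi * qf y a))]
  simp [qf]

lemma measurable_qf (x : ℝ) (a : K) : Measurable fun h : logSpace K => qf (yy x h) a := by
  unfold qf yy
  exact (continuous_finsetSum _ fun σ _ => (continuous_const.mul
    (Real.continuous_exp.comp (continuous_lo _))).mul continuous_const).measurable

lemma measurable_th0 (I : FractionalIdeal (𝓞 K)⁰ K) (x : ℝ) :
    Measurable fun h : logSpace K => th0 I (yy x h) := by
  have : Countable K := countable_field
  unfold th0
  exact Measurable.tsum fun a => by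
    have := measurable_qf x (a : K)
    fun_prop

lemma measurable_th (I : FractionalIdeal (𝓞 K)⁰ K) (x : ℝ) :
    Measurable fun h : logSpace K => th I (yy x h) := by
  simp_rw [th_eq]
  exact (measurable_th0 I x).const_add 1

/-- Integrated theta function. -/
noncomputable def TH (I : FractionalIdeal (𝓞 K)⁰ K) (F : Set (logSpace K)) (x : ℝ) : ℝ≥0∞ :=
  ∫⁻ h in F, th I (yy x h)

/-- Integrated theta function without zero term. -/
noncomputable def TH0 (I : FractionalIdeal (𝓞 K)⁰ K) (F : Set (logSpace K)) (x : ℝ) : ℝ≥0∞ :=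
  ∫⁻ h in F, th0 I (yy x h)

lemma TH_eq (I : FractionalIdeal (𝓞 K)⁰ K) (F : Set (logSpace K)) (x : ℝ) :
    TH I F x = volume F + TH0 I F x := by
  unfold TH TH0
  simp_rw [th_eq]
  rw [lintegral_add_left measurable_const]
  simp

lemma TH_inv (I : (FractionalIdeal (𝓞 K)⁰ K)ˣ) {F : Set (logSpace K)} (hF : MeasurableSet F)
    {x : ℝ} (hx : 0 < x) :
    TH (I : FractionalIdeal (𝓞 K)⁰ K) F (1 / x) =
      ENNReal.ofReal (((FractionalIdeal.absNorm I.1 : ℝ) * Real.sqrt |(discr K : ℝ)|)⁻¹ *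
        x ^ ((Module.finrank ℚ K : ℝ) / 2)) *
      TH (FractionalIdeal.dual ℤ ℚ (I : FractionalIdeal (𝓞 K)⁰ K)) (-F) x := by
  unfold TH
  have h1 : ∀ h : logSpace K, th (I : FractionalIdeal (𝓞 K)⁰ K) (yy (1 / x) h) =
      ENNReal.ofReal (((FractionalIdeal.absNorm I.1 : ℝ) * Real.sqrt |(discr K : ℝ)|)⁻¹ *
        x ^ ((Module.finrank ℚ K : ℝ) / 2)) *
      th (FractionalIdeal.dual ℤ ℚ (I : FractionalIdeal (𝓞 K)⁰ K)) (yy x (-h)) := by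
    intro h
    rw [th_inv I _ (yy_pos (by positivity) h), yy_inv, prod_yy]
    congr 3
    rw [mul_inv]
    congr 1
    rw [Real.sqrt_eq_rpow, ← Real.rpow_natCast, ← Real.rpow_mul (by positivity), one_div,
      Real.inv_rpow hx.le, inv_inv]
    congr 1
    ring
  simp_rw [h1]
  have hm : Measurable fun h : logSpace K =>
      th (FractionalIdeal.dual ℤ ℚ (I : FractionalIdeal (𝓞 K)⁰ K)) (yy x (-h)) :=
    (measurable_th _ x).comp measurable_neg
  rw [lintegral_const_mul _ hm]
  congr 1
  have := (Measure.measurePreserving_neg (volume : Measure (logSpace K))).setLIntegral_comp_preimage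
    (s := -F) hF.neg (measurable_th (FractionalIdeal.dual ℤ ℚ (I : FractionalIdeal (𝓞 K)⁰ K)) x)
  rw [← this]
  simp

end P5
end DFE
end PartP5

section PartP6
open MeasureTheory Set Complex NumberField

namespace DFE
set_option linter.unusedSectionVars false
section P6
open scoped nonZeroDivisors ENNReal Pointwise Classical
open _root_.NumberField.Units (logEmbedding unitLattice basisUnitLattice rank)
open Units.dirichletUnitTheorem
variable {K : Type*} [Field K] [NumberField K]

lemma lo_bound {F : Set (logSpace K)} (hF : Bornology.IsBounded F) :
    ∃ R : ℝ, ∀ h ∈ F, ∀ v, -R ≤ lo h v := by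
  obtain ⟨B, hB⟩ := hF.exists_norm_le
  let L := (loL (K := K)).toContinuousLinearMap
  refine ⟨‖L‖ * B, fun h hh v => ?_⟩
  have h1 : ‖L h‖ ≤ ‖L‖ * B := (L.le_opNorm h).trans (by gcongr; exact hB h hh)
  have h2 : |lo h v| ≤ ‖L h‖ := norm_le_pi_norm (L h) v
  exact (abs_le.1 (h2.trans h1)).1

lemma th0_basis {ι : Type*} [Fintype ι] [DecidableEq ι] (b : Module.Basis ι ℚ K)
    (I : FractionalIdeal (𝓞 K)⁰ K)
    (h : ∀ x, x ∈ Submodule.span ℤ (Set.range b) ↔ x ∈ I) (y : InfinitePlace K → ℝ) :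
    th0 I y = ∑' m : ι → ℤ, if m = 0 then 0 else
      ENNReal.ofReal (Real.exp (-Real.pi * qf y (∑ i, m i • b i))) := by
  have h1 := tsum_ne_zero I (fun a => if a = 0 then 0 else
    ENNReal.ofReal (Real.exp (-Real.pi * qf y a)))
  rw [if_pos rfl, zero_add, tsum_basis b I h (fun a => if a = 0 then 0 else
    ENNReal.ofReal (Real.exp (-Real.pi * qf y a)))] at h1
  unfold th0
  trans ∑' a : {a : K // a ∈ I ∧ a ≠ 0}, (fun a : K => if a = 0 then 0 else
    ENNReal.ofReal (Real.exp (-Real.pi * qf y a))) a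
  · congr 1; ext a
    simp [a.2.2]
  · rw [← h1]
    congr 1; ext m
    have : (∑ i, m i • b i = 0) ↔ m = 0 := by
      constructor
      · intro hm
        have h2 := Fintype.linearIndependent_iff.1 b.linearIndependent (fun i => (m i : ℚ))
          (by simpa [Rat.smul_def] using hm)
        ext i
        simpa using h2 i
      · rintro rfl; simp
    simp only [this]

lemma th0_le (I : (FractionalIdeal (𝓞 K)⁰ K)ˣ) (R : ℝ) (k : ℕ)
    (hk : Module.finrank ℚ K < 2 * k) : ∃ C : ℝ≥0∞, C ≠ ⊤ ∧ ∀ x : ℝ, 0 < x → ∀ h : logSpace K,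
      (∀ v, -R ≤ lo h v) →
      th0 (I : FractionalIdeal (𝓞 K)⁰ K) (yy x h) ≤ C * ENNReal.ofReal ((x ^ k)⁻¹) := by
  set b := basisOfFractionalIdeal K I with hb
  obtain ⟨c, hc, hlow⟩ := qf_lower b
  have hcard : Fintype.card (Module.Free.ChooseBasisIndex ℤ I) = Module.finrank ℚ K :=
    (Module.finrank_eq_card_basis b).symm
  have hs := summable_int_norm (ι := Module.Free.ChooseBasisIndex ℤ I) (-(2 * k : ℕ) : ℝ)
    (by rw [hcard]; simpa using (by exact_mod_cast hk : (Module.finrank ℚ K : ℝ) < (2 * k : ℕ)))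
  set A : ℝ := k.factorial * ((Real.exp (-R) * c) ^ k)⁻¹ with hA
  have hA0 : 0 ≤ A := by positivity
  refine ⟨ENNReal.ofReal (∑' m : Module.Free.ChooseBasisIndex ℤ I → ℤ,
    A * ‖(fun i => (m i : ℝ))‖ ^ (-(2 * k : ℕ) : ℝ)), ENNReal.ofReal_ne_top, fun x hx h hh => ?_⟩
  rw [th0_basis b I.1 (fun x => mem_span_basisOfFractionalIdeal K),
    ENNReal.ofReal_tsum_of_nonneg (fun _ => by positivity) (hs.mul_left A), ← ENNReal.tsum_mul_right]
  refine ENNReal.tsum_le_tsum fun m => ?_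
  split_ifs with hm
  · exact zero_le
  rw [← ENNReal.ofReal_mul (by positivity)]
  apply ENNReal.ofReal_le_ofReal
  set N := ‖(fun i => (m i : ℝ))‖ with hN
  have hNpos : 0 < N := by
    rw [hN, norm_pos_iff]
    intro h0
    apply hm
    ext i
    simpa using congrFun h0 i
  set t := x * Real.exp (-R) * (c * N ^ 2) with ht
  have htpos : 0 < t := by positivity
  have h1 : t ≤ qf (yy x h) (∑ i, m i • b i) := by
    calc t ≤ x * Real.exp (-R) * qf (fun _ => 1) (∑ i, m i • b i) := by
          rw [ht]; gcongr; exact hlow m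
      _ = qf (fun _ => x * Real.exp (-R) * 1) (∑ i, m i • b i) := (qf_smul _ _ _).symm
      _ ≤ _ := qf_mono (fun v => by
          unfold yy; rw [mul_one]; gcongr; exact hh v) _
  have h2 : t ^ k / k.factorial ≤ Real.exp t := Real.pow_div_factorial_le_exp t htpos.le k
  calc Real.exp (-Real.pi * qf (yy x h) (∑ i, m i • b i)) ≤ Real.exp (-t) := by
        apply Real.exp_le_exp.2
        have := Real.pi_gt_three
        nlinarith
    _ = (Real.exp t)⁻¹ := Real.exp_neg t
    _ ≤ (t ^ k / k.factorial)⁻¹ := by gcongr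
    _ = _ := by
        rw [ht, hA, Real.rpow_neg hNpos.le, Real.rpow_natCast]
        field_simp
        rw [pow_mul, ← mul_pow, ← mul_pow]
        ring

lemma TH0_le (I : (FractionalIdeal (𝓞 K)⁰ K)ˣ) {F : Set (logSpace K)} (hF : IsFD F) (k : ℕ)
    (hk : Module.finrank ℚ K < 2 * k) : ∃ C : ℝ≥0∞, C ≠ ⊤ ∧ ∀ x : ℝ, 0 < x →
      TH0 (I : FractionalIdeal (𝓞 K)⁰ K) F x ≤ C * ENNReal.ofReal ((x ^ k)⁻¹) := by
  obtain ⟨R, hR⟩ := lo_bound hF.2.1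
  obtain ⟨C, hC, h⟩ := th0_le I R k hk
  refine ⟨C * volume F, ENNReal.mul_ne_top hC hF.2.1.measure_lt_top.ne, fun x hx => ?_⟩
  unfold TH0
  calc _ ≤ ∫⁻ _ in F, C * ENNReal.ofReal ((x ^ k)⁻¹) :=
        setLIntegral_mono' hF.1 fun g hg => h x hx g (hR g hg)
    _ = _ := by rw [setLIntegral_const]; ring

lemma TH0_ne_top (I : (FractionalIdeal (𝓞 K)⁰ K)ˣ) {F : Set (logSpace K)} (hF : IsFD F)
    {x : ℝ} (hx : 0 < x) : TH0 (I : FractionalIdeal (𝓞 K)⁰ K) F x ≠ ⊤ := by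
  obtain ⟨C, hC, h⟩ := TH0_le I hF (Module.finrank ℚ K + 1) (by omega)
  exact ne_top_of_le_ne_top (ENNReal.mul_ne_top hC ENNReal.ofReal_ne_top) (h x hx)

lemma vol_ne_top {F : Set (logSpace K)} (hF : IsFD F) : volume F ≠ ⊤ :=
  hF.2.1.measure_lt_top.ne

lemma TH_ne_top (I : (FractionalIdeal (𝓞 K)⁰ K)ˣ) {F : Set (logSpace K)} (hF : IsFD F)
    {x : ℝ} (hx : 0 < x) : TH (I : FractionalIdeal (𝓞 K)⁰ K) F x ≠ ⊤ := by
  rw [TH_eq]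
  exact ENNReal.add_ne_top.2 ⟨vol_ne_top hF, TH0_ne_top I hF hx⟩

lemma TH_anti (I : FractionalIdeal (𝓞 K)⁰ K) (F : Set (logSpace K)) {x x' : ℝ}
    (h : x ≤ x') : TH I F x' ≤ TH I F x := by
  unfold TH th
  refine lintegral_mono fun g => ENNReal.tsum_le_tsum fun a => ENNReal.ofReal_le_ofReal ?_
  apply Real.exp_le_exp.2
  have : qf (yy x g) (a : K) ≤ qf (yy x' g) a := qf_mono (fun v => by unfold yy; gcongr) _
  nlinarith [Real.pi_pos]

/-- The complex valued theta integral. -/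
noncomputable def thC (I : FractionalIdeal (𝓞 K)⁰ K) (F : Set (logSpace K)) (x : ℝ) : ℂ :=
  ((TH I F x).toReal : ℂ)

lemma thC_int (I : (FractionalIdeal (𝓞 K)⁰ K)ˣ) {F : Set (logSpace K)} (hF : IsFD F) :
    LocallyIntegrableOn (thC (I : FractionalIdeal (𝓞 K)⁰ K) F) (Ioi 0) := by
  rw [locallyIntegrableOn_iff isOpen_Ioi.isLocallyClosed]
  intro k hk hkc
  have h1 : AntitoneOn (fun x => (TH (I : FractionalIdeal (𝓞 K)⁰ K) F x).toReal) k := by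
    intro x hx x' _ hxx'
    exact ENNReal.toReal_mono (TH_ne_top I hF (hk hx)) (TH_anti _ _ hxx')
  exact (h1.integrableOn_isCompact hkc).ofReal

lemma thC_sub (I : (FractionalIdeal (𝓞 K)⁰ K)ˣ) {F : Set (logSpace K)} (hF : IsFD F)
    {x : ℝ} (hx : 0 < x) : thC (I : FractionalIdeal (𝓞 K)⁰ K) F x - ((volume F).toReal : ℂ) =
      ((TH0 (I : FractionalIdeal (𝓞 K)⁰ K) F x).toReal : ℂ) := by
  unfold thC
  rw [TH_eq, ENNReal.toReal_add (vol_ne_top hF) (TH0_ne_top I hF hx)]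
  push_cast
  ring

lemma thC_top (I : (FractionalIdeal (𝓞 K)⁰ K)ˣ) {F : Set (logSpace K)} (hF : IsFD F) (r : ℝ) :
    (fun x => thC (I : FractionalIdeal (𝓞 K)⁰ K) F x - ((volume F).toReal : ℂ))
      =O[Filter.atTop] (fun x => x ^ r) := by
  obtain ⟨m, hm⟩ := exists_nat_ge (-r)
  set k := m + Module.finrank ℚ K + 1 with hk
  obtain ⟨C, hC, h⟩ := TH0_le I hF k (by omega)
  refine Asymptotics.IsBigO.of_bound C.toReal ?_
  filter_upwards [Filter.eventually_ge_atTop 1] with x hx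
  have hx0 : 0 < x := by linarith
  rw [thC_sub I hF hx0, Complex.norm_real, Real.norm_of_nonneg ENNReal.toReal_nonneg,
    Real.norm_of_nonneg (by positivity)]
  have h1 := ENNReal.toReal_mono (ENNReal.mul_ne_top hC ENNReal.ofReal_ne_top) (h x hx0)
  rw [ENNReal.toReal_mul, ENNReal.toReal_ofReal (by positivity)] at h1
  refine h1.trans ?_
  gcongr
  rw [← Real.rpow_natCast, ← Real.rpow_neg hx0.le]
  apply Real.rpow_le_rpow_of_exponent_le hx
  rw [hk]; push_cast
  have : (0:ℝ) ≤ Module.finrank ℚ K := by positivity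
  linarith

/-- The dual as a unit. -/
noncomputable def dualU (I : (FractionalIdeal (𝓞 K)⁰ K)ˣ) : (FractionalIdeal (𝓞 K)⁰ K)ˣ :=
  Units.mk0 (FractionalIdeal.dual ℤ ℚ (I : FractionalIdeal (𝓞 K)⁰ K))
    (FractionalIdeal.dual_ne_zero ℤ ℚ (Units.ne_zero I))

lemma dualU_coe (I : (FractionalIdeal (𝓞 K)⁰ K)ˣ) : (dualU I : FractionalIdeal (𝓞 K)⁰ K) =
    FractionalIdeal.dual ℤ ℚ (I : FractionalIdeal (𝓞 K)⁰ K) := rfl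

lemma absNorm_pos (I : (FractionalIdeal (𝓞 K)⁰ K)ˣ) :
    (0:ℝ) < (FractionalIdeal.absNorm I.1 : ℝ) := by
  have h : (0:ℚ) < FractionalIdeal.absNorm I.1 :=
    lt_of_le_of_ne (FractionalIdeal.absNorm_nonneg _)
      (Ne.symm (FractionalIdeal.absNorm_eq_zero_iff.not.2 (Units.ne_zero I)))
  exact_mod_cast h

lemma sqrt_discr_pos : 0 < Real.sqrt |(discr K : ℝ)| := by
  have := discr_ne_zero K
  positivity

/-- The functional equation pair. -/
noncomputable def pair (I : (FractionalIdeal (𝓞 K)⁰ K)ˣ) {F : Set (logSpace K)} (hF : IsFD F) :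
    WeakFEPair ℂ where
  f := thC (I : FractionalIdeal (𝓞 K)⁰ K) F
  g := thC (dualU I : FractionalIdeal (𝓞 K)⁰ K) (-F)
  k := (Module.finrank ℚ K : ℝ) / 2
  ε := ((((FractionalIdeal.absNorm I.1 : ℝ) * Real.sqrt |(discr K : ℝ)|)⁻¹ : ℝ) : ℂ)
  f₀ := ((volume F).toReal : ℂ)
  g₀ := ((volume (-F)).toReal : ℂ)
  hf_int := thC_int I hF
  hg_int := thC_int (dualU I) hF.neg
  hk := by
    have : 0 < Module.finrank ℚ K := Module.finrank_pos
    positivity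
  hε := by
    have := absNorm_pos I
    have := sqrt_discr_pos (K := K)
    rw [Complex.ofReal_ne_zero]
    positivity
  h_feq := by
    intro x hx
    have hx' : (0:ℝ) < x := hx
    have := absNorm_pos I
    unfold thC
    rw [TH_inv I hF.1 hx, ENNReal.toReal_mul, ENNReal.toReal_ofReal (by positivity), dualU_coe]
    push_cast
    simp
  hf_top := thC_top I hF
  hg_top := thC_top (dualU I) hF.neg

end P6
end DFE
end PartP6

section PartP7a
open MeasureTheory Set Complex NumberField

namespace DFE
set_option linter.unusedSectionVars false
section P7a
open scoped nonZeroDivisors ENNReal Pointwise Classical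
open _root_.NumberField.Units (logEmbedding unitLattice basisUnitLattice rank)
open Units.dirichletUnitTheorem
variable {K : Type*} [Field K] [NumberField K]

lemma lintegral_exp_sub (f : ℝ → ℝ≥0∞) :
    ∫⁻ x in Ioi 0, f x = ∫⁻ t, ENNReal.ofReal (Real.exp t) * f (Real.exp t) := by
  have := lintegral_image_eq_lintegral_abs_deriv_mul (s := univ) (f := Real.exp)
    (f' := Real.exp) MeasurableSet.univ (fun x _ => (Real.hasDerivAt_exp x).hasDerivWithinAt)
    Real.exp_injective.injOn f
  rw [image_univ, Real.range_exp] at this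
  simpa [abs_of_pos (Real.exp_pos _)] using this

lemma lintegral_one {a r : ℝ} (ha : 0 < a) (hr : 0 < r) :
    ∫⁻ t, ENNReal.ofReal (Real.exp (-r * Real.exp t) * Real.exp (a * t)) =
      ENNReal.ofReal ((1 / r) ^ a * Real.Gamma a) := by
  rw [← Real.integral_rpow_mul_exp_neg_mul_Ioi ha hr,
    ofReal_integral_eq_lintegral_ofReal, lintegral_exp_sub]
  · congr 1
    ext t
    rw [← ENNReal.ofReal_mul (Real.exp_pos _).le, Real.rpow_def_of_pos (Real.exp_pos _),
      Real.log_exp, ← Real.exp_add, ← Real.exp_add, ← Real.exp_add]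
    congr 2
    ring
  · by_contra h
    have h1 := integral_undef h
    rw [Real.integral_rpow_mul_exp_neg_mul_Ioi ha hr] at h1
    have : 0 < (1 / r) ^ a * Real.Gamma a := by
      have := Real.Gamma_pos_of_pos ha
      positivity
    linarith
  · refine (ae_restrict_iff' measurableSet_Ioi).2 (Filter.Eventually.of_forall fun x hx => ?_)
    have : (0:ℝ) < x := hx
    simp only [Pi.zero_apply]
    positivity

lemma lintegral_pi_prod {ι : Type*} [Fintype ι] (f : ι → ℝ → ℝ) (c : ι → ℝ)
    (hm : ∀ i, Measurable (f i)) (hf : ∀ i t, 0 ≤ f i t) (hc : ∀ i, 0 ≤ c i)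
    (h : ∀ i, ∫⁻ t, ENNReal.ofReal (f i t) = ENNReal.ofReal (c i)) :
    ∫⁻ u : ι → ℝ, ENNReal.ofReal (∏ i, f i (u i)) = ENNReal.ofReal (∏ i, c i) := by
  have hfint : ∀ i, Integrable (f i) := fun i => by
    refine ⟨(hm i).aestronglyMeasurable, ?_⟩
    rw [hasFiniteIntegral_iff_ofReal (Filter.Eventually.of_forall (hf i)), h]
    exact ENNReal.ofReal_lt_top
  rw [← ofReal_integral_eq_lintegral_ofReal]
  · congr 1
    rw [integral_fintype_prod_volume_eq_prod]
    congr 1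
    ext i
    rw [integral_eq_lintegral_of_nonneg_ae (Filter.Eventually.of_forall (hf i))
      (hm i).aestronglyMeasurable, h, ENNReal.toReal_ofReal (hc i)]
  · exact Integrable.fintype_prod hfint
  · exact Filter.Eventually.of_forall fun u => Finset.prod_nonneg fun i _ => hf i _

/-- The map `(h, t) ↦ (t + lo h v)_v`. -/
noncomputable def TL : (logSpace K × ℝ) →ₗ[ℝ] (InfinitePlace K → ℝ) where
  toFun p v := p.2 + lo p.1 v
  map_add' p q := by ext v; simp [lo_add]; ring
  map_smul' c p := by ext v; simp [lo_smul]; ring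

lemma sum_mult_real : ∑ v : InfinitePlace K, (v.mult : ℝ) = Module.finrank ℚ K := by
  rw [← InfinitePlace.sum_mult_eq]; push_cast; rfl

lemma sum_mult_TL (p : logSpace K × ℝ) :
    ∑ v : InfinitePlace K, (v.mult : ℝ) * TL p v = Module.finrank ℚ K * p.2 := by
  simp only [TL, LinearMap.coe_mk, AddHom.coe_mk, mul_add, Finset.sum_add_distrib, sum_mult_lo,
    ← Finset.sum_mul, sum_mult_real, add_zero]

lemma TL_inj : Function.Injective (TL : (logSpace K × ℝ) →ₗ[ℝ] (InfinitePlace K → ℝ)) := by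
  rw [injective_iff_map_eq_zero]
  intro p hp
  have h1 := sum_mult_TL p
  rw [hp] at h1
  have hn : (Module.finrank ℚ K : ℝ) ≠ 0 := by
    exact_mod_cast (Module.finrank_pos (R := ℚ) (M := K)).ne'
  have h2 : p.2 = 0 := by simpa [hn] using h1
  have h3 : p.1 = 0 := by
    ext w
    have h4 : TL p w.1 = 0 := by rw [hp]; rfl
    simp only [TL, LinearMap.coe_mk, AddHom.coe_mk, h2, zero_add, lo, dif_neg w.2] at h4
    have := (mult_pos' w.1).ne'
    simpa [this] using h4
  exact Prod.ext h3 h2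

lemma TL_finrank : Module.finrank ℝ (logSpace K × ℝ) = Module.finrank ℝ (InfinitePlace K → ℝ) := by
  rw [Module.finrank_prod, Module.finrank_self, Module.finrank_fintype_fun_eq_card,
    Module.finrank_fintype_fun_eq_card, Fintype.card_subtype_compl]
  have : 0 < Fintype.card (InfinitePlace K) := Fintype.card_pos
  simp
  omega

variable (K) in
lemma exists_TL_const : ∃ c : ℝ≥0∞, c ≠ 0 ∧ c ≠ ⊤ ∧ ∀ f : (InfinitePlace K → ℝ) → ℝ≥0∞,
    Measurable f → ∫⁻ h : logSpace K, ∫⁻ t : ℝ, f (TL (h, t)) = c * ∫⁻ u, f u := by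
  let e := (LinearMap.linearEquivOfInjective (TL (K := K)) TL_inj TL_finrank).toContinuousLinearEquiv
  have he : ∀ p, e p = TL p := fun p => rfl
  have hV : Measure.IsAddHaarMeasure (volume : Measure (logSpace K × ℝ)) :=
    inferInstanceAs (Measure.IsAddHaarMeasure ((volume : Measure (logSpace K)).prod (volume : Measure ℝ)))
  have hH : Measure.IsAddHaarMeasure ((volume : Measure (logSpace K × ℝ)).map e) :=
    e.isAddHaarMeasure_map _
  have h1 := Measure.isAddLeftInvariant_eq_smul ((volume : Measure (logSpace K × ℝ)).map e) volume
  refine ⟨Measure.addHaarScalarFactor ((volume : Measure (logSpace K × ℝ)).map e) volume, ?_, by simp, ?_⟩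
  · exact_mod_cast (Measure.addHaarScalarFactor_pos_of_isAddHaarMeasure _ _).ne'
  · intro f hf
    have h2 : ∫⁻ h : logSpace K, ∫⁻ t : ℝ, f (TL (h, t)) = ∫⁻ p : logSpace K × ℝ, f (e p) := by
      rw [Measure.volume_eq_prod, lintegral_prod]
      · rfl
      · exact (hf.comp e.continuous.measurable).aemeasurable
    rw [h2, ← lintegral_map hf e.continuous.measurable]
    refine (congrArg (fun μ => ∫⁻ a, f a ∂μ) h1).trans ?_
    simp only [lintegral_smul_measure]
    rfl

end P7a
end DFE
end PartP7a

section PartP7b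
open MeasureTheory Set Complex NumberField

namespace DFE
set_option linter.unusedSectionVars false
section P7b
open scoped nonZeroDivisors ENNReal Pointwise Classical
open _root_.NumberField.Units (logEmbedding unitLattice basisUnitLattice rank torsion torsionOrder)
open Units.dirichletUnitTheorem
variable {K : Type*} [Field K] [NumberField K]

/-- The Mellin kernel. -/
noncomputable def kern (s : ℝ) (a : K) (h : logSpace K) (x : ℝ) : ℝ≥0∞ :=
  ENNReal.ofReal (Real.exp (-Real.pi * qf (yy x h) a) *
    x ^ ((Module.finrank ℚ K : ℝ) * s / 2 - 1))

lemma measurable_kern (s : ℝ) (a : K) :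
    Measurable fun p : logSpace K × ℝ => kern s a p.1 p.2 := by
  unfold kern
  have h1 : Continuous fun p : logSpace K × ℝ => qf (yy p.2 p.1) a := by
    unfold qf yy
    exact continuous_finsetSum _ fun σ _ => (continuous_snd.mul
      (Real.continuous_exp.comp ((continuous_lo _).comp continuous_fst))).mul continuous_const
  have h2 := h1.measurable
  fun_prop

/-- The Mellin transform of a single term. -/
noncomputable def Psi (s : ℝ) (a : K) (h : logSpace K) : ℝ≥0∞ := ∫⁻ x in Ioi 0, kern s a h x

lemma measurable_Psi (s : ℝ) (a : K) : Measurable (Psi s a) :=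
  (measurable_kern s a).lintegral_prod_right'

lemma mellin_TH0 (I : FractionalIdeal (𝓞 K)⁰ K) (F : Set (logSpace K)) (s : ℝ) :
    ∫⁻ x in Ioi 0, TH0 I F x * ENNReal.ofReal (x ^ ((Module.finrank ℚ K : ℝ) * s / 2 - 1)) =
      ∑' a : {a : K // a ∈ I ∧ a ≠ 0}, ∫⁻ h in F, Psi s a.1 h := by
  have : Countable K := countable_field
  unfold TH0
  have h1 : ∀ x : ℝ, (∫⁻ h in F, th0 I (yy x h)) *
      ENNReal.ofReal (x ^ ((Module.finrank ℚ K : ℝ) * s / 2 - 1)) =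
      ∑' a : {a : K // a ∈ I ∧ a ≠ 0}, ∫⁻ h in F, kern s a.1 h x := by
    intro x
    rw [← lintegral_mul_const _ (measurable_th0 I x), ← lintegral_tsum]
    · congr 1
      ext h
      rw [th0, ← ENNReal.tsum_mul_right]
      congr 1
      ext a
      rw [kern, ENNReal.ofReal_mul (Real.exp_pos _).le]
    · intro a
      exact ((measurable_kern s a.1).comp measurable_prodMk_right).aemeasurable
  simp_rw [h1]
  rw [lintegral_tsum]
  · congr 1
    ext a
    unfold Psi
    rw [lintegral_lintegral_swap]
    exact ((measurable_kern s a.1).comp measurable_swap).aemeasurable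
  · intro a
    have := ((measurable_kern s a.1).comp measurable_swap)
    exact (Measurable.lintegral_prod_right' (ν := volume.restrict F) this).aemeasurable

lemma kern_unit (s : ℝ) (a : K) (ε : (𝓞 K)ˣ) (h : logSpace K) (x : ℝ) :
    kern s ((ε : K) * a) h x = kern s a (logEmbedding K (Additive.ofMul ε) + h) x := by
  unfold kern
  congr 4
  rw [qf_eq, qf_eq]
  refine Finset.sum_congr rfl fun v _ => ?_
  have hv : 0 < v (ε : K) := v.pos_iff.2 (by simp)
  rw [yy, yy, lo_add, lo_unit, Real.exp_add, mul_comm 2, Real.exp_mul, Real.exp_log hv, map_mul,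
    Real.rpow_two]
  ring

lemma Psi_unit (s : ℝ) (a : K) (ε : (𝓞 K)ˣ) (h : logSpace K) :
    Psi s ((ε : K) * a) h = Psi s a (logEmbedding K (Additive.ofMul ε) + h) := by
  unfold Psi
  simp_rw [kern_unit]

lemma mem_unitLattice_iff (x : logSpace K) :
    x ∈ unitLattice K ↔ ∃ ε : (𝓞 K)ˣ, logEmbedding K (Additive.ofMul ε) = x := by
  unfold unitLattice
  rw [Submodule.mem_map]
  constructor
  · rintro ⟨y, _, hy⟩; exact ⟨y.toMul, hy⟩
  · rintro ⟨ε, hy⟩; exact ⟨Additive.ofMul ε, trivial, hy⟩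

lemma sum_units (f : unitLattice K → ℝ≥0∞) :
    ∑' ε : (𝓞 K)ˣ, f ⟨logEmbedding K (Additive.ofMul ε), (mem_unitLattice_iff _).2 ⟨ε, rfl⟩⟩ =
      torsionOrder K * ∑' g, f g := by
  choose e he using fun g : unitLattice K => (mem_unitLattice_iff g.1).1 g.2
  let φ : unitLattice K × torsion K → (𝓞 K)ˣ := fun p => e p.1 * p.2.1
  have hφ : ∀ p, logEmbedding K (Additive.ofMul (φ p)) = p.1.1 := fun p => by
    have h2 := (logEmbedding_eq_zero_iff (x := p.2.1)).2 p.2.2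
    simp only [φ, ofMul_mul, map_add, he, h2, add_zero]
  have hb : Function.Bijective φ := by
    constructor
    · intro p q h
      have h1 : p.1 = q.1 := by
        ext1; rw [← hφ, ← hφ, h]
      have h2 : e p.1 * p.2.1 = e q.1 * q.2.1 := h
      rw [h1] at h2
      exact Prod.ext h1 (Subtype.ext (mul_left_cancel h2))
    · intro ε
      let g : unitLattice K :=
        ⟨logEmbedding K (Additive.ofMul ε), (mem_unitLattice_iff _).2 ⟨ε, rfl⟩⟩
      refine ⟨(g, ⟨(e g)⁻¹ * ε, ?_⟩), ?_⟩
      · rw [← logEmbedding_eq_zero_iff, ofMul_mul, map_add, ofMul_inv, map_neg, he]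
        simp [g]
      · simp [φ]
  rw [← (Equiv.ofBijective φ hb).tsum_eq]
  have : ∀ p, f ⟨logEmbedding K (Additive.ofMul (Equiv.ofBijective φ hb p)),
      (mem_unitLattice_iff _).2 ⟨_, rfl⟩⟩ = f p.1 := fun p => by
    congr 1
    exact Subtype.ext (hφ p)
  rw [tsum_congr this, ENNReal.tsum_prod (f := fun a _ => f a)]
  rw [← ENNReal.tsum_mul_left]
  refine tsum_congr fun g => ?_
  have : Fintype (torsion K) := Fintype.ofFinite _
  rw [tsum_fintype, Finset.sum_const, nsmul_eq_mul]
  congr 2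
  rw [torsionOrder, Nat.card_eq_fintype_card]; rfl

lemma sum_units_Psi {F : Set (logSpace K)} (hF : IsFD F) (s : ℝ) (a : K) :
    ∑' ε : (𝓞 K)ˣ, ∫⁻ h in F, Psi s ((ε : K) * a) h = torsionOrder K * ∫⁻ h, Psi s a h := by
  have h1 : IsAddFundamentalDomain (unitLattice K) F (volume : Measure (logSpace K)) :=
    IsAddFundamentalDomain.mk' hF.1.nullMeasurableSet hF.2.2
  have : VAddInvariantMeasure (unitLattice K) (logSpace K) volume :=
    inferInstanceAs <| VAddInvariantMeasure (unitLattice K).toAddSubgroup _ _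
  rw [h1.lintegral_eq_tsum'', ← sum_units]
  simp_rw [Psi_unit]
  rfl

/-- The archimedean factor. -/
noncomputable def gam (K : Type*) [Field K] [NumberField K] (s : ℝ) : ℝ :=
  ∏ v : InfinitePlace K, ((1 / (Real.pi * v.mult)) ^ ((v.mult : ℝ) * s / 2) *
    Real.Gamma ((v.mult : ℝ) * s / 2))

lemma gam_pos {s : ℝ} (hs : 0 < s) : 0 < gam K s := by
  refine Finset.prod_pos fun v _ => ?_
  have := mult_pos' v
  have h2 : 0 < (v.mult : ℝ) * s / 2 := by positivity
  have := Real.Gamma_pos_of_pos h2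
  positivity

variable (K) in
lemma exists_Psi_const : ∃ c : ℝ≥0∞, c ≠ 0 ∧ c ≠ ⊤ ∧ ∀ (s : ℝ) (a : K), 0 < s → a ≠ 0 →
    ∫⁻ h, Psi s a h = c * ENNReal.ofReal (gam K s * |(Algebra.norm ℚ a : ℝ)| ^ (-s)) := by
  obtain ⟨c, hc0, hct, hc⟩ := exists_TL_const K
  refine ⟨c, hc0, hct, fun s a hs ha => ?_⟩
  let f : InfinitePlace K → ℝ → ℝ := fun v t =>
    Real.exp (-(Real.pi * v.mult * (v a) ^ 2) * Real.exp t) * Real.exp ((v.mult : ℝ) * s / 2 * t)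
  have hva : ∀ v : InfinitePlace K, 0 < v a := fun v => v.pos_iff.2 ha
  have key : ∀ h t, ENNReal.ofReal (Real.exp t) * kern s a h (Real.exp t) =
      ENNReal.ofReal (∏ v, f v (TL (h, t) v)) := by
    intro h t
    rw [kern, ← ENNReal.ofReal_mul (Real.exp_pos _).le]
    congr 1
    simp only [f]
    rw [Finset.prod_mul_distrib, ← Real.exp_sum, ← Real.exp_sum, ← Real.exp_add,
      Real.rpow_def_of_pos (Real.exp_pos _), Real.log_exp, ← Real.exp_add, ← Real.exp_add]
    congr 1
    have h1 : ∑ v : InfinitePlace K, (v.mult : ℝ) * s / 2 * TL (h, t) v =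
        s / 2 * (Module.finrank ℚ K * t) := by
      have := sum_mult_TL (h, t)
      rw [← this, Finset.mul_sum]
      exact Finset.sum_congr rfl fun v _ => by ring
    rw [h1, qf_eq, Finset.mul_sum]
    have h2 : ∑ v : InfinitePlace K, -Real.pi * ((v.mult : ℝ) * yy (Real.exp t) h v * v a ^ 2) =
      ∑ v : InfinitePlace K, -(Real.pi * v.mult * v a ^ 2) * Real.exp (TL (h, t) v) := by
      refine Finset.sum_congr rfl fun v _ => ?_
      have : TL (h, t) v = t + lo h v := rfl
      rw [this, Real.exp_add, yy]
      ring
    rw [h2]; ring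
  have hm : ∀ v, Measurable (f v) := fun v => by
    simp only [f]; fun_prop
  unfold Psi
  simp_rw [lintegral_exp_sub, key]
  rw [hc (fun u => ENNReal.ofReal (∏ v, f v (u v))) (by fun_prop)]
  congr 1
  rw [lintegral_pi_prod f (fun v => (1 / (Real.pi * v.mult * (v a) ^ 2)) ^ ((v.mult : ℝ) * s / 2) *
    Real.Gamma ((v.mult : ℝ) * s / 2)) hm]
  · congr 1
    rw [gam]
    have h3 : |(Algebra.norm ℚ a : ℝ)| ^ (-s) = ∏ v : InfinitePlace K, (v a ^ v.mult) ^ (-s) := by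
      rw [Real.finsetProd_rpow _ _ (fun v _ => by have := hva v; positivity),
        InfinitePlace.prod_eq_abs_norm]
      push_cast; rfl
    rw [h3, ← Finset.prod_mul_distrib]
    refine Finset.prod_congr rfl fun v _ => ?_
    have h4 := hva v
    have h5 := mult_pos' v
    have h6 : (1 / (Real.pi * v.mult * (v a) ^ 2)) ^ ((v.mult : ℝ) * s / 2) =
      (1 / (Real.pi * v.mult)) ^ ((v.mult : ℝ) * s / 2) * (v a ^ v.mult) ^ (-s) := by
      rw [show 1 / (Real.pi * v.mult * (v a) ^ 2) = (1 / (Real.pi * v.mult)) * ((v a) ^ 2)⁻¹ by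
        field_simp, Real.mul_rpow (by positivity) (by positivity)]
      congr 1
      rw [← Real.rpow_natCast, ← Real.rpow_natCast, ← Real.rpow_neg h4.le, ← Real.rpow_mul h4.le,
        ← Real.rpow_mul h4.le]
      congr 1
      push_cast; ring
    rw [h6]; ring
  · intro v t; positivity
  · intro v
    have h4 := hva v
    have h5 := mult_pos' v
    have := Real.Gamma_pos_of_pos (show 0 < (v.mult : ℝ) * s / 2 by positivity)
    positivity
  · intro v
    have h4 := hva v
    have h5 := mult_pos' v
    exact lintegral_one (by positivity) (by positivity)

end P7b
end DFE
end PartP7b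

section PartP7c
open MeasureTheory Set Complex NumberField

namespace DFE
set_option linter.unusedSectionVars false
section P7c
open scoped nonZeroDivisors ENNReal Pointwise Classical
open _root_.NumberField.Units (logEmbedding unitLattice basisUnitLattice rank torsion torsionOrder)
open Units.dirichletUnitTheorem
variable {K : Type*} [Field K] [NumberField K]

/-- A family of representatives of the ideal classes. -/
def IsRep {ι : Type*} (J : ι → (FractionalIdeal (𝓞 K)⁰ K)ˣ) : Prop :=
  ∀ A : (FractionalIdeal (𝓞 K)⁰ K)ˣ, ∃! C, ∃ a : Kˣ, A * J C = toPrincipalIdeal (𝓞 K) K a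

/-- The invertible fractional ideal of a nonzero ideal. -/
noncomputable def idU (A : {I : Ideal (𝓞 K) // I ≠ ⊥}) : (FractionalIdeal (𝓞 K)⁰ K)ˣ :=
  Units.mk0 (A.1 : FractionalIdeal (𝓞 K)⁰ K) (FractionalIdeal.coeIdeal_ne_zero.2 A.2)

lemma idU_coe (A : {I : Ideal (𝓞 K) // I ≠ ⊥}) :
    ((idU A : (FractionalIdeal (𝓞 K)⁰ K)ˣ) : FractionalIdeal (𝓞 K)⁰ K) = A.1 := rfl

lemma idU_inj : Function.Injective (idU (K := K)) := by
  intro A B h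
  have := congrArg Units.val h
  rw [idU_coe, idU_coe] at this
  exact Subtype.ext (FractionalIdeal.coeIdeal_injective this)

lemma span_eq_iff (a b : Kˣ) : toPrincipalIdeal (𝓞 K) K a = toPrincipalIdeal (𝓞 K) K b ↔
    ∃ ε : (𝓞 K)ˣ, (b : K) = (ε : K) * a := by
  constructor
  · intro h
    have h1 : toPrincipalIdeal (𝓞 K) K (b * a⁻¹) = 1 := by rw [map_mul, map_inv, h, mul_inv_cancel]
    have h2 : FractionalIdeal.spanSingleton (𝓞 K)⁰ ((b * a⁻¹ : Kˣ) : K) = 1 := by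
      rw [← coe_toPrincipalIdeal, h1]; rfl
    have h1' : toPrincipalIdeal (𝓞 K) K (a * b⁻¹) = 1 := by rw [map_mul, map_inv, h, mul_inv_cancel]
    have h2' : FractionalIdeal.spanSingleton (𝓞 K)⁰ ((a * b⁻¹ : Kˣ) : K) = 1 := by
      rw [← coe_toPrincipalIdeal, h1']; rfl
    have h3 : ((b * a⁻¹ : Kˣ) : K) ∈ (1 : FractionalIdeal (𝓞 K)⁰ K) := by
      rw [← h2]; exact FractionalIdeal.mem_spanSingleton_self _ _
    have h3' : ((a * b⁻¹ : Kˣ) : K) ∈ (1 : FractionalIdeal (𝓞 K)⁰ K) := by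
      rw [← h2']; exact FractionalIdeal.mem_spanSingleton_self _ _
    obtain ⟨x, hx⟩ := (FractionalIdeal.mem_one_iff _).1 h3
    obtain ⟨y, hy⟩ := (FractionalIdeal.mem_one_iff _).1 h3'
    have hxy : x * y = 1 := by
      apply FaithfulSMul.algebraMap_injective (𝓞 K) K
      rw [map_mul, hx, hy, map_one, ← Units.val_mul]
      simp
    refine ⟨⟨x, y, hxy, by rw [mul_comm, hxy]⟩, ?_⟩
    show (b : K) = algebraMap (𝓞 K) K x * a
    rw [hx]; simp
  · rintro ⟨ε, h⟩
    ext1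
    rw [coe_toPrincipalIdeal, coe_toPrincipalIdeal, h, FractionalIdeal.spanSingleton_eq_spanSingleton]
    exact ⟨ε, by rw [Units.smul_def, Algebra.smul_def]⟩

lemma ideal_bij {ι : Type*} {J : ι → (FractionalIdeal (𝓞 K)⁰ K)ˣ} (hJ : IsRep J) :
    ∃ (C : {I : Ideal (𝓞 K) // I ≠ ⊥} → ι) (a : {I : Ideal (𝓞 K) // I ≠ ⊥} → K)
      (e : {I : Ideal (𝓞 K) // I ≠ ⊥} × (𝓞 K)ˣ ≃
        Σ C, {a : K // a ∈ (J C : FractionalIdeal (𝓞 K)⁰ K) ∧ a ≠ 0}),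
      (∀ A, a A ≠ 0) ∧ (∀ A, |(Algebra.norm ℚ (a A) : ℚ)| =
        Ideal.absNorm A.1 * FractionalIdeal.absNorm (J (C A)).1) ∧
      (∀ A ε, (e (A, ε)).1 = C A) ∧ (∀ A ε, ((e (A, ε)).2 : K) = (ε : K) * a A) := by
  choose C hC hCu using fun A => hJ (idU A)
  choose a ha using hC
  have hmem : ∀ A, (a A : K) ∈ (J (C A) : FractionalIdeal (𝓞 K)⁰ K) := by
    intro A
    have h1 : (a A : K) ∈ (A.1 : FractionalIdeal (𝓞 K)⁰ K) * (J (C A) : FractionalIdeal (𝓞 K)⁰ K) := by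
      rw [← idU_coe, ← Units.val_mul, ha, coe_toPrincipalIdeal]
      exact FractionalIdeal.mem_spanSingleton_self _ _
    have h2 : (A.1 : FractionalIdeal (𝓞 K)⁰ K) * (J (C A) : FractionalIdeal (𝓞 K)⁰ K) ≤ J (C A) :=
      calc _ ≤ 1 * (J (C A) : FractionalIdeal (𝓞 K)⁰ K) := by
            gcongr; exact FractionalIdeal.coeIdeal_le_one
        _ = _ := one_mul _
    exact h2 h1
  have hmem' : ∀ A (ε : (𝓞 K)ˣ), (ε : K) * (a A : K) ∈ (J (C A) : FractionalIdeal (𝓞 K)⁰ K) := by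
    intro A ε
    have := Submodule.smul_mem (J (C A) : FractionalIdeal (𝓞 K)⁰ K).coeToSubmodule (ε : 𝓞 K) (hmem A)
    rwa [Algebra.smul_def] at this
  let φ : {I : Ideal (𝓞 K) // I ≠ ⊥} × (𝓞 K)ˣ →
      Σ C, {a : K // a ∈ (J C : FractionalIdeal (𝓞 K)⁰ K) ∧ a ≠ 0} := fun p =>
    ⟨C p.1, (p.2 : K) * a p.1, hmem' p.1 p.2, by simp⟩
  have hφ : Function.Bijective φ := by
    constructor
    · rintro ⟨A, ε⟩ ⟨B, η⟩ h
      have h1 : C A = C B := congrArg Sigma.fst h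
      have h2 : (ε : K) * a A = (η : K) * a B := congrArg (fun x => (x.2 : K)) h
      have h3 : toPrincipalIdeal (𝓞 K) K (a A) = toPrincipalIdeal (𝓞 K) K (a B) := by
        rw [span_eq_iff]
        refine ⟨η⁻¹ * ε, ?_⟩
        have h4 : ((η⁻¹ * ε : (𝓞 K)ˣ) : K) = ((η⁻¹ : (𝓞 K)ˣ) : K) * (ε : K) := by simp
        rw [h4, mul_assoc, h2, ← mul_assoc]
        simp
      rw [← ha, ← ha, h1] at h3
      have h5 := idU_inj (mul_right_cancel h3)
      subst h5
      have h6 := mul_right_cancel₀ (a A).ne_zero h2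
      have h7 : ε = η := by
        ext; exact h6
      rw [h7]
    · rintro ⟨D, b, hb, hb0⟩
      have h1 : FractionalIdeal.spanSingleton (𝓞 K)⁰ b * ((J D)⁻¹ : (FractionalIdeal (𝓞 K)⁰ K)ˣ).1 ≤ 1 := by
        have : FractionalIdeal.spanSingleton (𝓞 K)⁰ b ≤ (J D).1 :=
          FractionalIdeal.spanSingleton_le_iff_mem.2 hb
        calc _ ≤ (J D).1 * ((J D)⁻¹ : (FractionalIdeal (𝓞 K)⁰ K)ˣ).1 := by gcongr
          _ = 1 := by rw [← Units.val_mul, mul_inv_cancel]; rfl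
      obtain ⟨A, hA⟩ := FractionalIdeal.le_one_iff_exists_coeIdeal.1 h1
      have hA0 : A ≠ ⊥ := by
        rintro rfl
        have h2 : FractionalIdeal.spanSingleton (𝓞 K)⁰ b * ((J D)⁻¹ : (FractionalIdeal (𝓞 K)⁰ K)ˣ).1 = 0 := by
          rw [← hA]; simp
        rw [Units.mul_left_eq_zero, FractionalIdeal.spanSingleton_eq_zero_iff] at h2
        exact hb0 h2
      let A' : {I : Ideal (𝓞 K) // I ≠ ⊥} := ⟨A, hA0⟩
      have h3 : idU A' * J D = toPrincipalIdeal (𝓞 K) K (Units.mk0 b hb0) := by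
        ext1
        rw [Units.val_mul, idU_coe, coe_toPrincipalIdeal]
        show (A : FractionalIdeal (𝓞 K)⁰ K) * _ = _
        rw [hA, mul_assoc, ← Units.val_mul, inv_mul_cancel]
        simp
      have h4 : D = C A' := hCu A' D ⟨_, h3⟩
      subst h4
      rw [ha, span_eq_iff] at h3
      obtain ⟨ε, hε⟩ := h3
      refine ⟨(A', ε), ?_⟩
      exact Sigma.subtype_ext rfl hε.symm
  refine ⟨C, fun A => a A, Equiv.ofBijective φ hφ, fun A => (a A).ne_zero, fun A => ?_,
    fun A ε => rfl, fun A ε => rfl⟩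
  have h := congrArg (fun x => FractionalIdeal.absNorm x.1) (ha A)
  simp only [Units.val_mul, map_mul, coe_toPrincipalIdeal, idU_coe,
    FractionalIdeal.absNorm_span_singleton, FractionalIdeal.coeIdeal_absNorm] at h
  exact h.symm

variable (K) in
lemma exists_zeta_const : ∃ c : ℝ≥0∞, c ≠ 0 ∧ c ≠ ⊤ ∧ ∀ (ι : Type*) (_ : Fintype ι)
    (J : ι → (FractionalIdeal (𝓞 K)⁰ K)ˣ) (_ : IsRep J) (F : Set (logSpace K)) (_ : IsFD F) (s : ℝ)
    (_ : 0 < s),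
    ∑ C, ENNReal.ofReal ((FractionalIdeal.absNorm (J C).1 : ℝ) ^ s) *
      ∫⁻ x in Ioi 0, TH0 (J C) F x * ENNReal.ofReal (x ^ ((Module.finrank ℚ K : ℝ) * s / 2 - 1)) =
    c * ENNReal.ofReal (gam K s) * ∑' A : {I : Ideal (𝓞 K) // I ≠ ⊥},
      ENNReal.ofReal ((Ideal.absNorm A.1 : ℝ) ^ (-s)) := by
  obtain ⟨c, hc0, hct, hc⟩ := exists_Psi_const K
  refine ⟨torsionOrder K * c, ?_, ?_, ?_⟩
  · simp [hc0, (Units.torsionOrder_pos K).ne']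
  · exact ENNReal.mul_ne_top (by simp) hct
  intro ι _ J hJ F hF s hs
  obtain ⟨C, a, e, ha0, haN, he1, he2⟩ := ideal_bij hJ
  simp_rw [mellin_TH0, ← ENNReal.tsum_mul_left]
  rw [← tsum_fintype (L := .unconditional ι)]
  have h1 := ENNReal.tsum_sigma' (β := fun C => {a : K // a ∈ (J C : FractionalIdeal (𝓞 K)⁰ K) ∧ a ≠ 0})
    (fun p => ENNReal.ofReal ((FractionalIdeal.absNorm (J p.1).1 : ℝ) ^ s) *
      ∫⁻ h in F, Psi s p.2.1 h)
  rw [← h1, ← e.tsum_eq]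
  have h2 : ∀ p, ENNReal.ofReal ((FractionalIdeal.absNorm (J (e p).1).1 : ℝ) ^ s) *
      ∫⁻ h in F, Psi s (e p).2.1 h = ENNReal.ofReal ((FractionalIdeal.absNorm (J (C p.1)).1 : ℝ) ^ s) *
      ∫⁻ h in F, Psi s ((p.2 : K) * a p.1) h := by
    rintro ⟨A, ε⟩
    simp only [he2]
    congr 6
    exact congrArg J (he1 A ε)
  rw [tsum_congr h2, ENNReal.tsum_prod (f := fun A (ε : (𝓞 K)ˣ) =>
    ENNReal.ofReal ((FractionalIdeal.absNorm (J (C A)).1 : ℝ) ^ s) *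
      ∫⁻ h in F, Psi s ((ε : K) * a A) h)]
  refine tsum_congr fun A => ?_
  rw [ENNReal.tsum_mul_left, sum_units_Psi hF, hc s _ hs (ha0 A)]
  have h3 : |((Algebra.norm ℚ (a A) : ℚ) : ℝ)| =
      Ideal.absNorm A.1 * (FractionalIdeal.absNorm (J (C A)).1 : ℝ) := by
    have := congrArg (fun q : ℚ => (q : ℝ)) (haN A)
    push_cast at this
    exact this
  have h4 : (0:ℝ) < (FractionalIdeal.absNorm (J (C A)).1 : ℝ) := by
    exact_mod_cast absNorm_pos (J (C A))
  rw [h3, ENNReal.ofReal_mul (gam_pos hs).le, Real.mul_rpow (by positivity) h4.le,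
    ENNReal.ofReal_mul (by positivity)]
  have h5 : ENNReal.ofReal ((FractionalIdeal.absNorm (J (C A)).1 : ℝ) ^ s) *
    ENNReal.ofReal ((FractionalIdeal.absNorm (J (C A)).1 : ℝ) ^ (-s)) = 1 := by
    rw [← ENNReal.ofReal_mul (by positivity), ← Real.rpow_add h4]
    simp
  calc _ = (ENNReal.ofReal ((FractionalIdeal.absNorm (J (C A)).1 : ℝ) ^ s) *
    ENNReal.ofReal ((FractionalIdeal.absNorm (J (C A)).1 : ℝ) ^ (-s))) * (torsionOrder K * c *
      ENNReal.ofReal (gam K s) * ENNReal.ofReal ((Ideal.absNorm A.1 : ℝ) ^ (-s))) := by ring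
    _ = _ := by rw [h5, one_mul]

end P7c
end DFE
end PartP7c

section PartP7d
open MeasureTheory Set Complex NumberField

namespace DFE
set_option linter.unusedSectionVars false
section P7d
open scoped nonZeroDivisors ENNReal Pointwise Classical
open _root_.NumberField.Units (logEmbedding unitLattice basisUnitLattice rank torsion torsionOrder)
open Units.dirichletUnitTheorem
variable {K : Type*} [Field K] [NumberField K]

variable (K) in
/-- The class group as a quotient of the group of fractional ideals. -/
abbrev Cl := (FractionalIdeal (𝓞 K)⁰ K)ˣ ⧸ (toPrincipalIdeal (𝓞 K) K).range

variable (K) in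
/-- Representatives. -/
noncomputable def rep (C : Cl K) : (FractionalIdeal (𝓞 K)⁰ K)ˣ := Quotient.out C

variable (K) in
noncomputable instance instFintypeCl : Fintype (Cl K) :=
  Fintype.ofEquiv _ (ClassGroup.equiv K).toEquiv

lemma rep_iff (A : (FractionalIdeal (𝓞 K)⁰ K)ˣ) (C : Cl K) :
    (∃ a : Kˣ, A * rep K C = toPrincipalIdeal (𝓞 K) K a) ↔ C = (QuotientGroup.mk A)⁻¹ := by
  have h1 : (QuotientGroup.mk (rep K C) : Cl K) = C := QuotientGroup.out_eq' C
  have h2 : (∃ a : Kˣ, A * rep K C = toPrincipalIdeal (𝓞 K) K a) ↔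
      (QuotientGroup.mk (A * rep K C) : Cl K) = 1 := by
    rw [QuotientGroup.eq_one_iff, MonoidHom.mem_range]
    exact exists_congr fun a => eq_comm
  rw [h2, QuotientGroup.mk_mul, h1, mul_eq_one_iff_eq_inv']

lemma isRep_rep : IsRep (rep K) := by
  intro A
  simp_rw [rep_iff]
  exact ⟨_, rfl, fun _ h => h⟩

lemma dualU_mul (I : (FractionalIdeal (𝓞 K)⁰ K)ˣ) : dualU I = dualU 1 * I⁻¹ := by
  ext1
  rw [Units.val_mul, dualU_coe, dualU_coe, FractionalIdeal.dual_eq_mul_inv, Units.val_inv_eq_inv_val]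
  rfl

lemma isRep_dual : IsRep (fun C => dualU (rep K C)) := by
  intro A
  obtain ⟨C, hC, hu⟩ := isRep_rep (A * dualU 1)⁻¹
  have key : ∀ C, (∃ a : Kˣ, A * dualU (rep K C) = toPrincipalIdeal (𝓞 K) K a) ↔
      ∃ a : Kˣ, (A * dualU 1)⁻¹ * rep K C = toPrincipalIdeal (𝓞 K) K a := by
    intro C
    have e : (A * dualU 1)⁻¹ * rep K C = (A * dualU (rep K C))⁻¹ := by
      rw [dualU_mul (rep K C)]
      simp only [mul_inv, inv_inv, mul_assoc]
    rw [e]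
    constructor
    · rintro ⟨a, h⟩; exact ⟨a⁻¹, by rw [h, map_inv]⟩
    · rintro ⟨a, h⟩; exact ⟨a⁻¹, by rw [map_inv, ← h, inv_inv]⟩
  simp_rw [key]
  exact ⟨C, hC, hu⟩

/-- The Mellin transform as an extended nonnegative real. -/
noncomputable def MM (I : FractionalIdeal (𝓞 K)⁰ K) (F : Set (logSpace K)) (s : ℝ) : ℝ≥0∞ :=
  ∫⁻ x in Ioi 0, TH0 I F x * ENNReal.ofReal (x ^ ((Module.finrank ℚ K : ℝ) * s / 2 - 1))

lemma mellin_real (I : (FractionalIdeal (𝓞 K)⁰ K)ˣ) {F : Set (logSpace K)} (hF : IsFD F) (s : ℝ)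
    {L : ℂ} (hL : HasMellin (fun x => thC (I : FractionalIdeal (𝓞 K)⁰ K) F x - ((volume F).toReal : ℂ))
      ((Module.finrank ℚ K : ℂ) * s / 2) L) :
    MM (I : FractionalIdeal (𝓞 K)⁰ K) F s ≠ ⊤ ∧ L = ((MM (I : FractionalIdeal (𝓞 K)⁰ K) F s).toReal : ℂ) := by
  obtain ⟨h1, h2⟩ := hL
  let g : ℝ → ℝ := fun x => x ^ ((Module.finrank ℚ K : ℝ) * s / 2 - 1) *
    (TH0 (I : FractionalIdeal (𝓞 K)⁰ K) F x).toReal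
  have hg : ∀ x ∈ Ioi (0:ℝ), ((x:ℂ) ^ (((Module.finrank ℚ K : ℂ) * s / 2) - 1)) •
      (thC (I : FractionalIdeal (𝓞 K)⁰ K) F x - ((volume F).toReal : ℂ)) = ((g x : ℝ) : ℂ) := by
    intro x hx
    have hx' : (0:ℝ) < x := hx
    rw [thC_sub I hF hx]
    simp only [g, smul_eq_mul]
    rw [Complex.ofReal_mul, Complex.ofReal_cpow hx'.le]
    push_cast
    rfl
  have h3 : IntegrableOn (fun x => ((g x : ℝ) : ℂ)) (Ioi 0) :=
    (integrableOn_congr_fun hg measurableSet_Ioi).1 h1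
  have h4 : IntegrableOn g (Ioi 0) := by
    have := Integrable.re (𝕜 := ℂ) h3
    simp only [RCLike.re_eq_complex_re, Complex.ofReal_re] at this
    exact this
  have hnn : 0 ≤ᵐ[volume.restrict (Ioi 0)] g := by
    refine (ae_restrict_iff' measurableSet_Ioi).2 (Filter.Eventually.of_forall fun x hx => ?_)
    have hx' : (0:ℝ) < x := hx
    simp only [Pi.zero_apply, g]
    positivity
  have h5 : MM (I : FractionalIdeal (𝓞 K)⁰ K) F s = ∫⁻ x in Ioi 0, ENNReal.ofReal (g x) := by
    refine setLIntegral_congr_fun measurableSet_Ioi fun x hx => ?_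
    have hx' : (0:ℝ) < x := hx
    simp only [g]
    rw [ENNReal.ofReal_mul (by positivity), ENNReal.ofReal_toReal (TH0_ne_top I hF hx), mul_comm]
  constructor
  · rw [h5]
    have := (hasFiniteIntegral_iff_ofReal hnn).1 h4.2
    exact this.ne
  · rw [← h2, mellin, setIntegral_congr_fun measurableSet_Ioi hg, integral_complex_ofReal, h5,
      integral_eq_lintegral_of_nonneg_ae hnn h4.1]

variable (K) in
lemma exists_zeta_const' : ∃ c : ℝ, c ≠ 0 ∧ ∀ (J : Cl K → (FractionalIdeal (𝓞 K)⁰ K)ˣ) (_ : IsRep J)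
    (F : Set (logSpace K)) (_ : IsFD F) (s : ℝ) (_ : 0 < s) (L : Cl K → ℂ)
    (_ : ∀ C, HasMellin (fun x => thC (J C : FractionalIdeal (𝓞 K)⁰ K) F x - ((volume F).toReal : ℂ))
      ((Module.finrank ℚ K : ℂ) * s / 2) (L C)),
    ∑ C, ((FractionalIdeal.absNorm (J C).1 : ℝ) : ℂ) ^ (s : ℂ) * L C = c * (gam K s : ℂ) *
      ∑' A : {I : Ideal (𝓞 K) // I ≠ ⊥}, (Ideal.absNorm (A : Ideal (𝓞 K)) : ℂ) ^ (-(s : ℂ)) := by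
  obtain ⟨c, hc0, hct, hc⟩ := exists_zeta_const K
  refine ⟨c.toReal, ENNReal.toReal_ne_zero.2 ⟨hc0, hct⟩, fun J hJ F hF s hs L hL => ?_⟩
  have h1 : ∑ C, ENNReal.ofReal ((FractionalIdeal.absNorm (J C).1 : ℝ) ^ s) *
      MM (J C : FractionalIdeal (𝓞 K)⁰ K) F s =
    c * ENNReal.ofReal (gam K s) * ∑' A : {I : Ideal (𝓞 K) // I ≠ ⊥},
      ENNReal.ofReal ((Ideal.absNorm A.1 : ℝ) ^ (-s)) := hc (Cl K) inferInstance J hJ F hF s hs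
  have h2 : ∀ C, L C = ((MM (J C : FractionalIdeal (𝓞 K)⁰ K) F s).toReal : ℂ) :=
    fun C => (mellin_real (J C) hF s (hL C)).2
  have h3 := congrArg (fun x => ((ENNReal.toReal x : ℝ) : ℂ)) h1
  rw [ENNReal.toReal_sum (fun C _ => ENNReal.mul_ne_top ENNReal.ofReal_ne_top
    (mellin_real (J C) hF s (hL C)).1), ENNReal.toReal_mul, ENNReal.toReal_mul,
    ENNReal.tsum_toReal_eq (fun _ => ENNReal.ofReal_ne_top), ENNReal.toReal_ofReal (gam_pos hs).le] at h3
  rw [Complex.ofReal_mul, Complex.ofReal_mul, Complex.ofReal_tsum, Complex.ofReal_sum] at h3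
  convert h3 using 1
  · refine Finset.sum_congr rfl fun C _ => ?_
    have := absNorm_pos (J C)
    rw [ENNReal.toReal_mul, ENNReal.toReal_ofReal (by positivity), Complex.ofReal_mul,
      Complex.ofReal_cpow this.le, h2 C]
  · congr 2
    ext A
    rw [ENNReal.toReal_ofReal (by positivity), Complex.ofReal_cpow (by positivity)]
    push_cast
    rfl

end P7d
end DFE
end PartP7d

section PartP8
open MeasureTheory Set Complex NumberField

namespace DFE
set_option linter.unusedSectionVars false
section P8
open scoped nonZeroDivisors ENNReal Pointwise Classical Topology
open _root_.NumberField.Units (logEmbedding unitLattice basisUnitLattice rank torsion torsionOrder)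
open Units.dirichletUnitTheorem
open Filter (Tendsto Eventually Frequently atTop)
variable {K : Type*} [Field K] [NumberField K]

lemma mero_ident {f g : ℂ → ℂ} (hf : MeromorphicOn f univ) (hg : MeromorphicOn g univ)
    (h : ∀ s : ℝ, 1 < s → f s = g s) : {s | f s ≠ g s}.Countable := by
  have hm : MeromorphicOn (f - g) univ := hf.sub hg
  have h2 : meromorphicOrderAt (f - g) (2:ℂ) = ⊤ := by
    by_contra hne
    rw [← ne_eq, meromorphicOrderAt_ne_top_iff_eventually_ne_zero (hm 2 trivial)] at hne
    have ht : Tendsto (fun t : ℝ => (t : ℂ)) (𝓝[≠] (2:ℝ)) (𝓝[≠] (2:ℂ)) := by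
      refine tendsto_nhdsWithin_iff.2 ⟨?_, ?_⟩
      · have := (Complex.continuous_ofReal.tendsto (2:ℝ)).mono_left
          (nhdsWithin_le_nhds (s := {(2:ℝ)}ᶜ))
        simpa using this
      · filter_upwards [self_mem_nhdsWithin] with t ht h3
        have h4 : (t : ℂ) = 2 := h3
        have h5 : t = 2 := by exact_mod_cast h4
        exact ht h5
    have h1 := ht.eventually hne
    have h3 : ∀ᶠ t : ℝ in 𝓝[≠] (2:ℝ), 1 < t :=
      nhdsWithin_le_nhds (lt_mem_nhds (by norm_num))
    obtain ⟨t, ht1, ht2⟩ := (h1.and h3).exists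
    exact ht1 (by simp [h t ht2])
  have h3 : ∀ x : ℂ, ∀ᶠ z in 𝓝[≠] x, (f - g) z = 0 := by
    intro x
    rw [← meromorphicOrderAt_eq_top_iff]
    by_contra hne
    exact hm.meromorphicOrderAt_ne_top_of_isPreconnected isPreconnected_univ trivial trivial hne h2
  apply (HereditarilyLindelofSpace.isLindelof _).countable_of_isDiscrete
  rw [isDiscrete_iff_nhdsNE]
  intro x _
  rw [← disjoint_iff, Filter.disjoint_principal_right]
  filter_upwards [h3 x] with z hz hz'
  exact hz' (sub_eq_zero.1 hz)

lemma mero_of_diff {f : ℂ → ℂ} (hf : Differentiable ℂ f) : MeromorphicOn f univ :=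
  fun x _ => (hf.analyticAt x).meromorphicAt

lemma mero_Λ (P : WeakFEPair ℂ) (a : ℂ) : MeromorphicOn (fun s => P.Λ (a * s / 2)) univ := by
  have h1 : MeromorphicOn (fun s : ℂ => P.Λ₀ (a * s / 2)) univ :=
    mero_of_diff (P.differentiable_Λ₀.comp (by fun_prop))
  have h2 : MeromorphicOn (fun s : ℂ => a * s / 2) univ := mero_of_diff (by fun_prop)
  have h3 : MeromorphicOn (fun s : ℂ => P.k - a * s / 2) univ := mero_of_diff (by fun_prop)
  have hc : ∀ b : ℂ, MeromorphicOn (fun _ : ℂ => b) univ := fun b => mero_of_diff (by fun_prop)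
  have := (h1.sub (((hc 1).div h2).mul (hc P.f₀))).sub (((hc P.ε).div h3).mul (hc P.g₀))
  exact this

/-- The complex archimedean factor. -/
noncomputable def gamC (K : Type*) [Field K] [NumberField K] (s : ℂ) : ℂ :=
  Gammaℝ s ^ InfinitePlace.nrRealPlaces K * (Gammaℂ s / 2) ^ InfinitePlace.nrComplexPlaces K

lemma mero_gamC : MeromorphicOn (gamC K) univ := by
  have h1 : MeromorphicOn Gammaℝ univ := by
    have := (mero_of_diff differentiable_Gammaℝ_inv).inv
    simpa [Pi.inv_def] using this
  have h2 : MeromorphicOn Gammaℂ univ := by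
    have := (mero_of_diff differentiable_Gammaℂ_inv).inv
    simpa [Pi.inv_def] using this
  exact (h1.pow _).mul ((h2.div (mero_of_diff (differentiable_const 2))).pow _)

lemma gam_eq {s : ℝ} (hs : 0 < s) : (gam K s : ℂ) = gamC K s := by
  have h1 : Gammaℝ s = (((1 / (Real.pi * (1:ℕ))) ^ (((1:ℕ) : ℝ) * s / 2) *
    Real.Gamma (((1:ℕ) : ℝ) * s / 2) : ℝ) : ℂ) := by
    rw [Gammaℝ_def, Complex.ofReal_mul, ← Complex.Gamma_ofReal, Nat.cast_one, mul_one, one_mul,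
      one_div, Real.inv_rpow Real.pi_pos.le, ← Real.rpow_neg Real.pi_pos.le,
      Complex.ofReal_cpow Real.pi_pos.le]
    push_cast
    ring_nf
  have h2 : Gammaℂ s / 2 = (((1 / (Real.pi * (2:ℕ))) ^ (((2:ℕ) : ℝ) * s / 2) *
    Real.Gamma (((2:ℕ) : ℝ) * s / 2) : ℝ) : ℂ) := by
    have h3 : (0:ℝ) ≤ Real.pi * (2:ℕ) := by positivity
    have h4 : ((2:ℕ):ℝ) * s / 2 = s := by push_cast; ring
    rw [Gammaℂ_def, Complex.ofReal_mul, ← Complex.Gamma_ofReal, h4,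
      one_div, Real.inv_rpow h3, ← Real.rpow_neg h3, Complex.ofReal_cpow h3]
    push_cast
    rw [mul_comm (Real.pi : ℂ) 2]
    ring
  rw [gamC, h1, h2, gam, ← Complex.ofReal_pow, ← Complex.ofReal_pow, ← Complex.ofReal_mul]
  congr 1
  rw [← Finset.prod_mul_prod_compl (Finset.univ.filter fun v : InfinitePlace K => v.IsReal)]
  congr 1
  · rw [InfinitePlace.nrRealPlaces, Fintype.card_subtype]
    refine Finset.prod_eq_pow_card fun v hv => ?_
    rw [InfinitePlace.mult_isReal ⟨v, (Finset.mem_filter.1 hv).2⟩]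
  · rw [InfinitePlace.nrComplexPlaces, Fintype.card_subtype, Finset.compl_filter]
    simp_rw [InfinitePlace.not_isReal_iff_isComplex]
    refine Finset.prod_eq_pow_card fun v hv => ?_
    rw [InfinitePlace.mult_isComplex ⟨v, (Finset.mem_filter.1 hv).2⟩]

lemma Gammaℂ_quot {s : ℂ} (hs : ∀ n : ℤ, s ≠ n) :
    Gammaℂ s = Gammaℂ (1 - s) * (Gammaℂ s ^ 2 * Complex.sin (Real.pi * s / 2) *
      Complex.cos (Real.pi * s / 2)) := by
  have hsin : Complex.sin (Real.pi * s) ≠ 0 := by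
    rw [Complex.sin_ne_zero_iff]
    intro k hk
    rw [mul_comm (k:ℂ)] at hk
    exact hs k (mul_left_cancel₀ (Complex.ofReal_ne_zero.2 Real.pi_ne_zero) hk)
  have h1 := Complex.Gamma_mul_Gamma_one_sub s
  have h2 : Complex.sin (Real.pi * s) = 2 * Complex.sin (Real.pi * s / 2) * Complex.cos (Real.pi * s / 2) := by
    rw [← Complex.sin_two_mul]; ring_nf
  have hp : (2 * Real.pi : ℂ) ≠ 0 := by simp [Real.pi_ne_zero]
  have h3 : (2 * Real.pi : ℂ) ^ (-s) * (2 * Real.pi : ℂ) ^ (-(1 - s)) = (2 * Real.pi : ℂ)⁻¹ := by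
    rw [← Complex.cpow_add _ _ hp, ← Complex.cpow_neg_one]; congr 1; ring
  have h4 : Gammaℂ s * Gammaℂ (1 - s) = 2 / Complex.sin (Real.pi * s) := by
    rw [Gammaℂ_def, Gammaℂ_def]
    calc _ = 4 * ((2 * Real.pi : ℂ) ^ (-s) * (2 * Real.pi : ℂ) ^ (-(1 - s))) *
        (Gamma s * Gamma (1 - s)) := by ring
      _ = _ := by
        rw [h3, h1]
        have := Complex.ofReal_ne_zero.2 Real.pi_ne_zero
        field_simp
        norm_num
  have h5 : Gammaℂ (1 - s) * (Gammaℂ s ^ 2 * Complex.sin (Real.pi * s / 2) *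
      Complex.cos (Real.pi * s / 2)) = Gammaℂ s * ((Gammaℂ s * Gammaℂ (1 - s)) *
        (2 * Complex.sin (Real.pi * s / 2) * Complex.cos (Real.pi * s / 2)) / 2) := by ring
  rw [h5, h4, ← h2]
  field_simp

lemma Gammaℝ_quot {s : ℂ} (hs : ∀ n : ℤ, s ≠ n) :
    Gammaℝ s = Gammaℝ (1 - s) * (Gammaℂ s * Complex.cos (Real.pi * s / 2)) := by
  have h := Gammaℝ_div_Gammaℝ_one_sub (s := s) (fun n => by
    have := hs (-(2 * n + 1)); push_cast at this; exact this)
  rw [← h, mul_div_cancel₀]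
  rw [Ne, Gammaℝ_eq_zero_iff, not_exists]
  intro n hn
  apply hs (1 + 2 * n)
  push_cast
  linear_combination -hn

lemma gamC_ne_zero {s : ℂ} (hs : ∀ n : ℤ, s ≠ n) : gamC K s ≠ 0 := by
  refine mul_ne_zero (pow_ne_zero _ ?_) (pow_ne_zero _ (div_ne_zero ?_ two_ne_zero))
  · rw [Ne, Gammaℝ_eq_zero_iff, not_exists]
    intro n hn
    exact hs (-(2 * n)) (by push_cast; exact hn)
  · rw [Gammaℂ_def]
    refine mul_ne_zero (mul_ne_zero two_ne_zero ?_) (Complex.Gamma_ne_zero fun n hn => hs (-n) (by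
      push_cast; exact hn))
    rw [Complex.cpow_ne_zero_iff]
    left; simp [Real.pi_ne_zero]

lemma gamC_quot {s : ℂ} (hs : ∀ n : ℤ, s ≠ n) :
    gamC K s = gamC K (1 - s) * (2 ^ ((Module.finrank ℚ K : ℂ) * (1 - s)) *
        (Real.pi : ℂ) ^ (-(Module.finrank ℚ K : ℂ) * s) * Complex.Gamma s ^ (Module.finrank ℚ K) *
        Complex.cos (Real.pi * s / 2) ^ (InfinitePlace.nrRealPlaces K + InfinitePlace.nrComplexPlaces K) *
        Complex.sin (Real.pi * s / 2) ^ (InfinitePlace.nrComplexPlaces K)) := by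
  have h1 : 2 ^ ((Module.finrank ℚ K : ℂ) * (1 - s)) *
        (Real.pi : ℂ) ^ (-(Module.finrank ℚ K : ℂ) * s) * Complex.Gamma s ^ (Module.finrank ℚ K) =
      Gammaℂ s ^ (Module.finrank ℚ K) := by
    rw [Gammaℂ_def, mul_pow]
    congr 1
    have h2 : ((2:ℂ) * Real.pi) ^ (-s) = (2:ℂ) ^ (-s) * (Real.pi : ℂ) ^ (-s) := by
      have := Complex.mul_cpow_ofReal_nonneg (a := 2) (b := Real.pi) (by norm_num) Real.pi_pos.le (-s)
      simpa using this
    rw [h2, Complex.cpow_nat_mul, show -(Module.finrank ℚ K : ℂ) * s = (Module.finrank ℚ K : ℂ) * (-s) by ring,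
      Complex.cpow_nat_mul, ← mul_pow, ← mul_assoc, sub_eq_add_neg, Complex.cpow_add _ _ two_ne_zero,
      Complex.cpow_one]
  rw [h1, ← InfinitePlace.card_add_two_mul_card_eq_rank]
  unfold gamC
  conv_lhs => rw [Gammaℝ_quot hs]
  rw [show (Gammaℂ s / 2) ^ InfinitePlace.nrComplexPlaces K = (Gammaℂ (1 - s) * (Gammaℂ s ^ 2 *
    Complex.sin (Real.pi * s / 2) * Complex.cos (Real.pi * s / 2)) / 2) ^ InfinitePlace.nrComplexPlaces K
    by rw [← Gammaℂ_quot hs]]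
  simp only [mul_pow, div_pow, pow_add, pow_mul]
  ring

end P8
end DFE
end PartP8

section PartP9
open MeasureTheory Set Complex NumberField

namespace DFE
set_option linter.unusedSectionVars false
section P9
open scoped nonZeroDivisors ENNReal Pointwise Classical Topology
open _root_.NumberField.Units (logEmbedding unitLattice basisUnitLattice rank torsion torsionOrder)
open Units.dirichletUnitTheorem
variable {K : Type*} [Field K] [NumberField K]

/-- The completed zeta function. -/
noncomputable def Ltot (J : Cl K → (FractionalIdeal (𝓞 K)⁰ K)ˣ) (L : Cl K → ℂ → ℂ) (s : ℂ) : ℂ :=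
  ∑ C, ((FractionalIdeal.absNorm (J C).1 : ℝ) : ℂ) ^ s * L C ((Module.finrank ℚ K : ℂ) * s / 2)

lemma mero_Ltot (J : Cl K → (FractionalIdeal (𝓞 K)⁰ K)ˣ) (P : Cl K → WeakFEPair ℂ) :
    MeromorphicOn (Ltot J (fun C => (P C).Λ)) univ := by
  have : Ltot J (fun C => (P C).Λ) = ∑ C, fun s =>
    ((FractionalIdeal.absNorm (J C).1 : ℝ) : ℂ) ^ s * (P C).Λ ((Module.finrank ℚ K : ℂ) * s / 2) := by
    ext s; simp [Ltot]
  rw [this]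
  refine MeromorphicOn.sum fun C _ => ?_
  have hN : ((FractionalIdeal.absNorm (J C).1 : ℝ) : ℂ) ≠ 0 :=
    Complex.ofReal_ne_zero.2 (absNorm_pos (J C)).ne'
  refine MeromorphicOn.mul (mero_of_diff ?_) (mero_Λ (P C) _)
  intro s
  exact (hasDerivAt_id s).const_cpow (Or.inl hN) |>.differentiableAt

lemma Ltot_fe {F : Set (logSpace K)} (hF : IsFD F) (s : ℂ) :
    Ltot (rep K) (fun C => (pair (rep K C) hF).Λ) (1 - s) =
      (((discr K).natAbs : ℂ)) ^ (s - 1 / 2) *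
        Ltot (fun C => dualU (rep K C)) (fun C => (pair (rep K C) hF).symm.Λ) s := by
  unfold Ltot
  rw [Finset.mul_sum]
  refine Finset.sum_congr rfl fun C _ => ?_
  have h1 := (pair (rep K C) hF).functional_equation ((Module.finrank ℚ K : ℂ) * s / 2)
  have h2 : ((pair (rep K C) hF).k : ℂ) - (Module.finrank ℚ K : ℂ) * s / 2 =
      (Module.finrank ℚ K : ℂ) * (1 - s) / 2 := by
    have : (pair (rep K C) hF).k = (Module.finrank ℚ K : ℝ) / 2 := rfl
    rw [this]; push_cast; ring
  have h3 : (pair (rep K C) hF).ε =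
    ((((FractionalIdeal.absNorm (rep K C).1 : ℝ) * Real.sqrt |(discr K : ℝ)|)⁻¹ : ℝ) : ℂ) := rfl
  rw [h2] at h1
  beta_reduce
  rw [h1, h3, smul_eq_mul, ← mul_assoc, ← mul_assoc]
  congr 1
  have hN := absNorm_pos (rep K C)
  have hD : (0:ℝ) < |(discr K : ℝ)| := abs_pos.2 (by exact_mod_cast discr_ne_zero K)
  have h4 : ((FractionalIdeal.absNorm (dualU (rep K C)).1 : ℚ) : ℝ) =
      (FractionalIdeal.absNorm (rep K C).1 : ℝ)⁻¹ * |(discr K : ℝ)|⁻¹ := by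
    rw [dualU_coe, absNorm_dual]; push_cast; rfl
  have h5 : ((discr K).natAbs : ℂ) = ((|(discr K : ℝ)| : ℝ) : ℂ) := by
    rw [← Complex.ofReal_natCast, Nat.cast_natAbs]; push_cast; rfl
  rw [h4, h5]
  generalize (FractionalIdeal.absNorm (rep K C).1 : ℝ) = N at *
  generalize |(discr K : ℝ)| = D at *
  have hN' : (N : ℂ) ≠ 0 := Complex.ofReal_ne_zero.2 hN.ne'
  have hD' : (D : ℂ) ≠ 0 := Complex.ofReal_ne_zero.2 hD.ne'
  have hs : ((Real.sqrt D : ℝ) : ℂ) = (D : ℂ) ^ (1 / 2 : ℂ) := by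
    rw [Real.sqrt_eq_rpow, Complex.ofReal_cpow hD.le]; push_cast; rfl
  have hinv : ∀ x : ℝ, 0 < x → ((x⁻¹ : ℝ) : ℂ) ^ s = ((x : ℂ) ^ s)⁻¹ := by
    intro x hx
    rw [Complex.ofReal_inv, Complex.inv_cpow]
    rw [Complex.arg_ofReal_of_nonneg hx.le]
    exact Real.pi_pos.ne
  rw [Complex.ofReal_mul N⁻¹, Complex.mul_cpow_ofReal_nonneg (by positivity) (by positivity),
    hinv N hN, hinv D hD, Complex.ofReal_inv, Complex.ofReal_mul, hs, Complex.cpow_sub _ _ hN',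
    Complex.cpow_sub _ _ hD', Complex.cpow_one]
  have e1 : (N : ℂ) ^ s ≠ 0 := by rw [Complex.cpow_ne_zero_iff]; exact Or.inl hN'
  have e2 : (D : ℂ) ^ s ≠ 0 := by rw [Complex.cpow_ne_zero_iff]; exact Or.inl hD'
  have e3 : (D : ℂ) ^ (1 / 2 : ℂ) ≠ 0 := by rw [Complex.cpow_ne_zero_iff]; exact Or.inl hD'
  field_simp

theorem main (Z : ℂ → ℂ) (hmero : MeromorphicOn Z Set.univ)
    (hZ : ∀ s : ℂ, 1 < s.re →
      Z s = ∑' I : {I : Ideal (𝓞 K) // I ≠ ⊥}, (Ideal.absNorm (I : Ideal (𝓞 K)) : ℂ) ^ (-s)) :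
    ∃ E : Set ℂ, E.Countable ∧ ∀ s ∉ E,
      Z (1 - s) = (((discr K).natAbs : ℂ)) ^ (s - 1 / 2) * 2 ^ ((Module.finrank ℚ K : ℂ) * (1 - s)) *
        (Real.pi : ℂ) ^ (-(Module.finrank ℚ K : ℂ) * s) * Complex.Gamma s ^ (Module.finrank ℚ K) *
        Complex.cos (Real.pi * s / 2) ^ (InfinitePlace.nrRealPlaces K + InfinitePlace.nrComplexPlaces K) *
        Complex.sin (Real.pi * s / 2) ^ (InfinitePlace.nrComplexPlaces K) * Z s := by
  obtain ⟨F, hF⟩ := exists_isFD (K := K)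
  obtain ⟨c, hc0, hc⟩ := exists_zeta_const' K
  let L1 := Ltot (rep K) (fun C => (pair (rep K C) hF).Λ)
  let L2 := Ltot (fun C => dualU (rep K C)) (fun C => (pair (rep K C) hF).symm.Λ)
  let G : ℂ → ℂ := fun s => (c : ℂ) * gamC K s * Z s
  have hG : MeromorphicOn G univ :=
    ((mero_of_diff (differentiable_const (c : ℂ))).mul mero_gamC).mul hmero
  have hre : ∀ s : ℝ, 1 < s → (Module.finrank ℚ K : ℝ) / 2 < ((Module.finrank ℚ K : ℂ) * s / 2).re := by
    intro s hs
    have hn : (0:ℝ) < Module.finrank ℚ K := by exact_mod_cast Module.finrank_pos (R := ℚ) (M := K)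
    have : ((Module.finrank ℚ K : ℂ) * s / 2) = (((Module.finrank ℚ K : ℝ) * s / 2 : ℝ) : ℂ) := by
      push_cast; rfl
    rw [this, Complex.ofReal_re]
    nlinarith
  have h1 : {s | L1 s ≠ G s}.Countable := by
    refine mero_ident (mero_Ltot _ _) hG fun s hs => ?_
    have := hc (rep K) isRep_rep F hF s (by linarith) _
      (fun C => (pair (rep K C) hF).hasMellin (hre s hs))
    simp only [L1, G, Ltot]
    rw [this, ← gam_eq (by linarith), hZ s (by simpa using hs)]
  have h2 : {s | L2 s ≠ G s}.Countable := by
    refine mero_ident (mero_Ltot _ _) hG fun s hs => ?_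
    have := hc (fun C => dualU (rep K C)) isRep_dual (-F) hF.neg s (by linarith) _
      (fun C => (pair (rep K C) hF).symm.hasMellin (hre s hs))
    simp only [L2, G, Ltot]
    rw [this, ← gam_eq (by linarith), hZ s (by simpa using hs)]
  refine ⟨(fun s => 1 - s) ⁻¹' {s | L1 s ≠ G s} ∪ {s | L2 s ≠ G s} ∪ range (fun n : ℤ => (n : ℂ)),
    ((h1.preimage (sub_right_injective)).union h2).union (countable_range _), fun s hs => ?_⟩
  simp only [mem_union, mem_preimage, Set.mem_ofPred_eq, mem_range, not_or, not_not, not_exists] at hs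
  obtain ⟨⟨e1, e2⟩, e3⟩ := hs
  have e3' : ∀ n : ℤ, s ≠ n := fun n h => e3 n h.symm
  have e4 : ∀ n : ℤ, 1 - s ≠ n := fun n h => e3' (1 - n) (by push_cast; rw [← h]; ring)
  have h3 : L1 (1 - s) = (((discr K).natAbs : ℂ)) ^ (s - 1 / 2) * L2 s := Ltot_fe hF s
  rw [e1, e2] at h3
  simp only [G] at h3
  rw [gamC_quot (K := K) e3'] at h3
  have h4 : (c : ℂ) * gamC K (1 - s) ≠ 0 :=
    mul_ne_zero (Complex.ofReal_ne_zero.2 hc0) (gamC_ne_zero e4)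
  apply mul_left_cancel₀ h4
  rw [h3]
  ring

end P9
end DFE
end PartP9

open NumberField Complex

theorem dedekind_functional_equation (K : Type*) [Field K] [NumberField K]
    (Z : ℂ → ℂ) (hmero : MeromorphicOn Z Set.univ)
    (hZ : ∀ s : ℂ, 1 < s.re →
      Z s = ∑' I : {I : Ideal (𝓞 K) // I ≠ ⊥}, (Ideal.absNorm (I : Ideal (𝓞 K)) : ℂ) ^ (-s)) :
    ∃ E : Set ℂ, E.Countable ∧ ∀ s ∉ E,
      Z (1 - s) = (((discr K).natAbs : ℂ)) ^ (s - 1 / 2) *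
        2 ^ ((Module.finrank ℚ K : ℂ) * (1 - s)) *
        (Real.pi : ℂ) ^ (-(Module.finrank ℚ K : ℂ) * s) *
        Complex.Gamma s ^ (Module.finrank ℚ K) *
        Complex.cos (Real.pi * s / 2) ^
          (InfinitePlace.nrRealPlaces K + InfinitePlace.nrComplexPlaces K) *
        Complex.sin (Real.pi * s / 2) ^ (InfinitePlace.nrComplexPlaces K) *
        Z s := by
  exact DFE.main Z hmero hZ
end
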